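/- Let T be an NSOP_3 complete first-order theory and let p(x) be a partial type over a small model M that is internally NSOP_1. Then p(x) is co-NSOP_1. -/

import Mathlib

namespace NSOP3Paper

open FirstOrder Language

universe u v w w' w₂ x y z

/-- Consistency (equivalently, by compactness over the monster model, finite
satisfiability) of a family of conditions on tuples. -/
def FamConsistent {ι : Type*} {X : Type*} (C : ι → X → Prop) : Prop :=
  ∀ s : Finset ι, ∃ xx : X, ∀ i ∈ s, C i xx

/-- `k`-inconsistency of a family of conditions: any `k` of them (with pairwise
distinct indices) are jointly unsatisfiable. -/
def FamKInconsistent {ι : Type*} {X : Type*} (k : ℕ) (C : ι → X → Prop) : Prop :=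
  ∀ s : Finset ι, s.card = k → ¬∃ xx : X, ∀ i ∈ s, C i xx

/-- Flattening of a family of tuples into a single tuple. -/
def flat {𝕄 : Type w} {ι : Type*} {β : Type*} (a : ι → β → 𝕄) : ι × β → 𝕄 :=
  fun q => a q.1 q.2

/-- A first-order `L`-formula in free variables `α`, together with a tuple of
parameters from `𝕄`; this represents an instance `φ(x̄, b̄)`. -/
structure ParamFormula (L : FirstOrder.Language.{u, v}) (𝕄 : Type w) [L.Structure 𝕄]
    (α : Type w') where
  Params : Type
  toFormula : L.Formula (α ⊕ Params)
  params : Params → 𝕄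

namespace ParamFormula

variable {L : FirstOrder.Language.{u, v}} {𝕄 : Type w} [L.Structure 𝕄] {α : Type w'}

/-- Realization of `φ(x̄, b̄)` at a tuple from `𝕄`. -/
def Realize (φ : ParamFormula L 𝕄 α) (xx : α → 𝕄) : Prop :=
  φ.toFormula.Realize (Sum.elim xx φ.params)

/-- All parameters of `φ` lie in `A`; i.e. `φ ∈ L(A)`. -/
def ParamsIn (φ : ParamFormula L 𝕄 α) (A : Set 𝕄) : Prop :=
  ∀ i, φ.params i ∈ A

/-- Negation of a formula with parameters. -/
protected def not (φ : ParamFormula L 𝕄 α) : ParamFormula L 𝕄 α :=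
  ⟨φ.Params, BoundedFormula.not φ.toFormula, φ.params⟩

/-- Substitute a tuple of elements of `𝕄` for the second group of free variables,
obtaining the instance `φ(x̄, c̄)` as a formula with parameters. -/
def subst {γ : Type} (φ : ParamFormula L 𝕄 (α ⊕ γ)) (c : γ → 𝕄) : ParamFormula L 𝕄 α :=
  ⟨γ ⊕ φ.Params,
    (φ.toFormula).relabel (Sum.elim (Sum.map id Sum.inl) (Sum.inr ∘ Sum.inr)),
    Sum.elim c φ.params⟩

end ParamFormula

section TypesDefs

variable (L : FirstOrder.Language.{u, v}) (𝕄 : Type w) [L.Structure 𝕄]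

/-- Two tuples have the same type over the parameter set `A` (written `b ≡_A b'`). -/
def TpEq (A : Set 𝕄) {β : Type w'} (b b' : β → 𝕄) : Prop :=
  ∀ φ : ParamFormula L 𝕄 β, φ.ParamsIn A → (φ.Realize b ↔ φ.Realize b')

/-- A complete global type in variables `α`: a complete, consistent set of formulas
with parameters from the monster model `𝕄`. -/
structure GlobalType (α : Type w') where
  Mem : ParamFormula L 𝕄 α → Prop
  consistent : ∀ S : Finset (ParamFormula L 𝕄 α), (∀ φ ∈ S, Mem φ) →
    ∃ xx : α → 𝕄, ∀ φ ∈ S, φ.Realize xx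
  complete : ∀ φ : ParamFormula L 𝕄 α, Mem φ ∨ Mem φ.not

/-- A sequence of tuples is indiscernible over the parameter set `A`: any two finite
increasing subtuples of the same length have the same type over `A`. -/
def IndiscernibleOver (A : Set 𝕄) {β : Type w'} (b : ℕ → β → 𝕄) : Prop :=
  ∀ (n : ℕ) (f g : Fin n → ℕ), StrictMono f → StrictMono g →
    TpEq L 𝕄 A (fun q : Fin n × β => b (f q.1) q.2) (fun q : Fin n × β => b (g q.1) q.2)

end TypesDefs

namespace GlobalType

variable {L : FirstOrder.Language.{u, v}} {𝕄 : Type w} [L.Structure 𝕄] {α : Type w'}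

/-- A global type is invariant over `A` if membership of `φ(x̄, b̄)` depends only on
the type of `b̄` over `A`. -/
def InvariantOver (p : GlobalType L 𝕄 α) (A : Set 𝕄) : Prop :=
  ∀ (P : Type) (ψ : L.Formula (α ⊕ P)) (b b' : P → 𝕄),
    TpEq L 𝕄 A b b' → (p.Mem ⟨P, ψ, b⟩ ↔ p.Mem ⟨P, ψ, b'⟩)

/-- A global type is finitely satisfiable in `A` if each of its formulas is satisfied
by a tuple from `A`. -/
def FinSatIn (p : GlobalType L 𝕄 α) (A : Set 𝕄) : Prop :=
  ∀ φ : ParamFormula L 𝕄 α, p.Mem φ → ∃ xx : α → 𝕄, (∀ i, xx i ∈ A) ∧ φ.Realize xx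

/-- `a ⊨ p|_B` : the tuple `a` realizes the restriction of the global type `p` to the
parameter set `B`. -/
def RealizesOver (p : GlobalType L 𝕄 α) (B : Set 𝕄) (a : α → 𝕄) : Prop :=
  ∀ φ : ParamFormula L 𝕄 α, p.Mem φ → φ.ParamsIn B → φ.Realize a

/-- `(b i)` is a Morley sequence in `p` over `A`: each `b i ⊨ p|_{A b_{<i}}`. -/
def IsMorleyOver (p : GlobalType L 𝕄 α) (A : Set 𝕄) (b : ℕ → α → 𝕄) : Prop :=
  ∀ i : ℕ, p.RealizesOver (A ∪ ⋃ j ∈ Set.Iio i, Set.range (b j)) (b i)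

end GlobalType

section MorleyDefs

variable (L : FirstOrder.Language.{u, v}) (𝕄 : Type w) [L.Structure 𝕄]

/-- `(b i)` is an invariant Morley sequence over `A`: a Morley sequence in some global
type invariant over `A`. -/
def IsInvMorleyOver (A : Set 𝕄) {α : Type w'} (b : ℕ → α → 𝕄) : Prop :=
  ∃ p : GlobalType L 𝕄 α, p.InvariantOver A ∧ p.IsMorleyOver A b

/-- `(b i)` is a coheir Morley sequence over `A`: a Morley sequence in some global
type finitely satisfiable in `A`. -/
def IsCoheirMorleyOver (A : Set 𝕄) {α : Type w'} (b : ℕ → α → 𝕄) : Prop :=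
  ∃ p : GlobalType L 𝕄 α, p.FinSatIn A ∧ p.IsMorleyOver A b

end MorleyDefs

namespace ParamFormula

variable {L : FirstOrder.Language.{u, v}} {𝕄 : Type w} [L.Structure 𝕄] {α : Type w'}

/-- `φ(x̄, b̄)` Kim-divides over `A`: some invariant Morley sequence over `A` starting
with `b̄` makes the corresponding instances inconsistent. -/
def KimDividesOver (φ : ParamFormula L 𝕄 α) (A : Set 𝕄) : Prop :=
  ∃ b : ℕ → φ.Params → 𝕄, b 0 = φ.params ∧ IsInvMorleyOver L 𝕄 A b ∧
    ¬FamConsistent fun (i : ℕ) (xx : α → 𝕄) => φ.toFormula.Realize (Sum.elim xx (b i))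

/-- `φ(x̄, b̄)` Conant-divides over `A`: every invariant Morley sequence over `A`
starting with `b̄` makes the corresponding instances inconsistent. -/
def ConantDividesOver (φ : ParamFormula L 𝕄 α) (A : Set 𝕄) : Prop :=
  ∀ b : ℕ → φ.Params → 𝕄, b 0 = φ.params → IsInvMorleyOver L 𝕄 A b →
    ¬FamConsistent fun (i : ℕ) (xx : α → 𝕄) => φ.toFormula.Realize (Sum.elim xx (b i))

/-- `φ(x̄, b̄)` divides over `A`: some `A`-indiscernible sequence starting with `b̄`
makes the corresponding instances inconsistent. -/
def DividesOver (φ : ParamFormula L 𝕄 α) (A : Set 𝕄) : Prop :=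
  ∃ b : ℕ → φ.Params → 𝕄, b 0 = φ.params ∧ IndiscernibleOver L 𝕄 A b ∧
    ¬FamConsistent fun (i : ℕ) (xx : α → 𝕄) => φ.toFormula.Realize (Sum.elim xx (b i))

/-- `φ` Kim-forks over `A`: it implies a finite disjunction of formulas Kim-dividing
over `A`. -/
def KimForksOver (φ : ParamFormula L 𝕄 α) (A : Set 𝕄) : Prop :=
  ∃ (k : ℕ) (ψ : Fin k → ParamFormula L 𝕄 α), (∀ j, (ψ j).KimDividesOver A) ∧
    ∀ xx : α → 𝕄, φ.Realize xx → ∃ j, (ψ j).Realize xx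

/-- `φ` Conant-forks over `A`: it implies a finite disjunction of formulas
Conant-dividing over `A`. -/
def ConantForksOver (φ : ParamFormula L 𝕄 α) (A : Set 𝕄) : Prop :=
  ∃ (k : ℕ) (ψ : Fin k → ParamFormula L 𝕄 α), (∀ j, (ψ j).ConantDividesOver A) ∧
    ∀ xx : α → 𝕄, φ.Realize xx → ∃ j, (ψ j).Realize xx

/-- `φ` forks over `A`: it implies a finite disjunction of formulas dividing over `A`. -/
def ForksOver (φ : ParamFormula L 𝕄 α) (A : Set 𝕄) : Prop :=
  ∃ (k : ℕ) (ψ : Fin k → ParamFormula L 𝕄 α), (∀ j, (ψ j).DividesOver A) ∧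
    ∀ xx : α → 𝕄, φ.Realize xx → ∃ j, (ψ j).Realize xx

end ParamFormula

section IndDefs

variable (L : FirstOrder.Language.{u, v}) (𝕄 : Type w) [L.Structure 𝕄]

/-- `a ⫝^K_A B` : `tp(a/A ∪ B)` contains no formula Kim-forking over `A`. -/
def IndKim (A B : Set 𝕄) {γ : Type w'} (a : γ → 𝕄) : Prop :=
  ∀ φ : ParamFormula L 𝕄 γ, φ.ParamsIn (A ∪ B) → φ.Realize a → ¬φ.KimForksOver A

/-- `a ⫝^{Kd}_A B` : `tp(a/A ∪ B)` contains no formula Kim-dividing over `A`. -/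
def IndKd (A B : Set 𝕄) {γ : Type w'} (a : γ → 𝕄) : Prop :=
  ∀ φ : ParamFormula L 𝕄 γ, φ.ParamsIn (A ∪ B) → φ.Realize a → ¬φ.KimDividesOver A

/-- `a ⫝^{K*}_A B` : Conant-independence. -/
def IndConant (A B : Set 𝕄) {γ : Type w'} (a : γ → 𝕄) : Prop :=
  ∀ φ : ParamFormula L 𝕄 γ, φ.ParamsIn (A ∪ B) → φ.Realize a → ¬φ.ConantForksOver A

/-- `a ⫝^{K*d}_A B` : Conant-dividing independence. -/
def IndConantD (A B : Set 𝕄) {γ : Type w'} (a : γ → 𝕄) : Prop :=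
  ∀ φ : ParamFormula L 𝕄 γ, φ.ParamsIn (A ∪ B) → φ.Realize a → ¬φ.ConantDividesOver A

/-- `a ⫝^f_A B` : forking-independence. -/
def IndForking (A B : Set 𝕄) {γ : Type w'} (a : γ → 𝕄) : Prop :=
  ∀ φ : ParamFormula L 𝕄 γ, φ.ParamsIn (A ∪ B) → φ.Realize a → ¬φ.ForksOver A

/-- `a ⫝^i_A B` : `tp(a/A ∪ B)` extends to a global type invariant over `A`. -/
def IndInv (A B : Set 𝕄) {γ : Type w'} (a : γ → 𝕄) : Prop :=
  ∃ p : GlobalType L 𝕄 γ, p.InvariantOver A ∧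
    ∀ φ : ParamFormula L 𝕄 γ, φ.ParamsIn (A ∪ B) → φ.Realize a → p.Mem φ

/-- `a ⫝^u_A B` : `tp(a/A ∪ B)` extends to a global type finitely satisfiable in `A`. -/
def IndFinSat (A B : Set 𝕄) {γ : Type w'} (a : γ → 𝕄) : Prop :=
  ∃ p : GlobalType L 𝕄 γ, p.FinSatIn A ∧
    ∀ φ : ParamFormula L 𝕄 γ, φ.ParamsIn (A ∪ B) → φ.Realize a → p.Mem φ

/-- `a ⫝^{K+}_A b` : there is an invariant Morley sequence over `A` starting with `b`
that is indiscernible over `A ∪ a`. -/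
def IndKPlus (A : Set 𝕄) {δ : Type w'} {γ : Type w₂} (b : δ → 𝕄) (a : γ → 𝕄) : Prop :=
  ∃ bs : ℕ → δ → 𝕄, bs 0 = b ∧ IsInvMorleyOver L 𝕄 A bs ∧
    IndiscernibleOver L 𝕄 (A ∪ Set.range a) bs

/-- `a ⫝^{K+u}_A b` : there is a coheir Morley sequence over `A` starting with `b`
that is indiscernible over `A ∪ a`. -/
def IndKPlusU (A : Set 𝕄) {δ : Type w'} {γ : Type w₂} (b : δ → 𝕄) (a : γ → 𝕄) : Prop :=
  ∃ bs : ℕ → δ → 𝕄, bs 0 = b ∧ IsCoheirMorleyOver L 𝕄 A bs ∧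
    IndiscernibleOver L 𝕄 (A ∪ Set.range a) bs

/-- Conant-independence `⫝^{K*}` is symmetric (over every small model). -/
def ConantSymmetric : Prop :=
  ∀ (M : L.ElementarySubstructure 𝕄) (γ δ : Type w) (a : γ → 𝕄) (b : δ → 𝕄),
    IndConant L 𝕄 (M : Set 𝕄) (Set.range b) a → IndConant L 𝕄 (M : Set 𝕄) (Set.range a) b

/-- Conant-dividing independence `⫝^{K*d}` is symmetric. -/
def ConantDSymmetric : Prop :=
  ∀ (M : L.ElementarySubstructure 𝕄) (γ δ : Type w) (a : γ → 𝕄) (b : δ → 𝕄),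
    IndConantD L 𝕄 (M : Set 𝕄) (Set.range b) a → IndConantD L 𝕄 (M : Set 𝕄) (Set.range a) b

/-- The relation `⫝^{K+}` is symmetric. -/
def KPlusSymmetric : Prop :=
  ∀ (M : L.ElementarySubstructure 𝕄) (γ δ : Type w) (a : γ → 𝕄) (b : δ → 𝕄),
    IndKPlus L 𝕄 (M : Set 𝕄) b a → IndKPlus L 𝕄 (M : Set 𝕄) a b

/-- Forking-independence satisfies the chain condition with respect to invariant
Morley sequences. -/
def ChainConditionF : Prop :=
  ∀ (M : L.ElementarySubstructure 𝕄) (γ δ : Type w) (a : γ → 𝕄) (bs : ℕ → δ → 𝕄),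
    IsInvMorleyOver L 𝕄 (M : Set 𝕄) bs →
    IndForking L 𝕄 (M : Set 𝕄) (Set.range (bs 0)) a →
    ∃ bs' : ℕ → δ → 𝕄,
      TpEq L 𝕄 ((M : Set 𝕄) ∪ Set.range (bs 0)) (flat bs') (flat bs) ∧
      IndiscernibleOver L 𝕄 ((M : Set 𝕄) ∪ Set.range a) bs' ∧
      IndForking L 𝕄 (M : Set 𝕄) (Set.range (flat bs')) a

/-- Kim-independence satisfies the chain condition with respect to invariant Morley
sequences. -/
def ChainConditionK : Prop :=
  ∀ (M : L.ElementarySubstructure 𝕄) (γ δ : Type w) (a : γ → 𝕄) (bs : ℕ → δ → 𝕄),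
    IsInvMorleyOver L 𝕄 (M : Set 𝕄) bs →
    IndKim L 𝕄 (M : Set 𝕄) (Set.range (bs 0)) a →
    ∃ bs' : ℕ → δ → 𝕄,
      TpEq L 𝕄 ((M : Set 𝕄) ∪ Set.range (bs 0)) (flat bs') (flat bs) ∧
      IndiscernibleOver L 𝕄 ((M : Set 𝕄) ∪ Set.range a) bs' ∧
      IndKim L 𝕄 (M : Set 𝕄) (Set.range (flat bs')) a

/-- `T` is NSOP₃: there is no definable binary relation on tuples with no 3-cycles
containing an infinite chain. -/
def IsNSOP3 : Prop :=
  ¬∃ (m : ℕ) (R : ParamFormula L 𝕄 (Fin m ⊕ Fin m)) (a : ℕ → Fin m → 𝕄),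
    (∀ i j : ℕ, i < j → R.Realize (Sum.elim (a i) (a j))) ∧
    ¬∃ x1 x2 x3 : Fin m → 𝕄,
      R.Realize (Sum.elim x1 x2) ∧ R.Realize (Sum.elim x2 x3) ∧ R.Realize (Sum.elim x3 x1)

/-- `𝕄` is a `κ`-monster: every consistent type in fewer than `κ` variables over a
parameter set of size less than `κ` is realized. -/
class IsMonster (κ : Cardinal.{w}) : Prop where
  saturated : ∀ {α : Type w} (A : Set 𝕄) (S : Set (ParamFormula L 𝕄 α)),
    Cardinal.mk α < κ → Cardinal.mk A < κ → (∀ φ ∈ S, φ.ParamsIn A) →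
    (∀ S₀ : Finset (ParamFormula L 𝕄 α), (∀ φ ∈ S₀, φ ∈ S) →
      ∃ xx : α → 𝕄, ∀ φ ∈ S₀, φ.Realize xx) →
    ∃ xx : α → 𝕄, ∀ φ ∈ S, φ.Realize xx

/-- A tuple realizes the partial type `P`. -/
def RealizesPType {nv : ℕ} (P : Set (ParamFormula L 𝕄 (Fin nv))) (a : Fin nv → 𝕄) : Prop :=
  ∀ φ ∈ P, φ.Realize a

/-- `p(x̄)` is co-NSOP₁: no `L(M)`-formula `φ(x̄, ȳ)` and tree of tuples of
realizations of `p` witness SOP₁-style consistency/inconsistency. -/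
def CoNSOP1 (M : Set 𝕄) {nv : ℕ} (P : Set (ParamFormula L 𝕄 (Fin nv))) : Prop :=
  ¬∃ (k m : ℕ) (φ : ParamFormula L 𝕄 (Fin k ⊕ (Fin m × Fin nv)))
      (b : List Bool → Fin m → Fin nv → 𝕄),
    φ.ParamsIn M ∧
    (∀ η j, RealizesPType L 𝕄 P (b η j)) ∧
    (∀ σ : ℕ → Bool, FamConsistent fun (n : ℕ) (xx : Fin k → 𝕄) =>
      (φ.subst (flat (b (List.ofFn fun i : Fin n => σ i)))).Realize xx) ∧
    (∀ η₁ η₂ : List Bool, (η₁ ++ [false]) <+: η₂ →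
      ¬∃ xx : Fin k → 𝕄, (φ.subst (flat (b η₂))).Realize xx ∧
        (φ.subst (flat (b (η₁ ++ [true])))).Realize xx)

/-- The set of realizations of the partial type `P`. -/
def PRealizations {nv : ℕ} (P : Set (ParamFormula L 𝕄 (Fin nv))) : Type w :=
  { a : Fin nv → 𝕄 // RealizesPType L 𝕄 P a }

/-- The language `L_p` associated to a partial `nv`-type: an `m`-ary relation symbol
for each `L(M)`-formula in `m` groups of `nv` variables. -/
def pLang (M : Set 𝕄) (nv : ℕ) : Language :=
  ⟨fun _ => Empty, fun m => { φ : ParamFormula L 𝕄 (Fin m × Fin nv) // φ.ParamsIn M }⟩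

/-- The structure `M_p` on the set of realizations of `p`, with relations interpreted
by the corresponding formulas in `𝕄`. -/
instance pStruct (M : Set 𝕄) {nv : ℕ} (P : Set (ParamFormula L 𝕄 (Fin nv))) :
    (pLang L 𝕄 M nv).Structure (PRealizations L 𝕄 P) where
  funMap := fun {n} f _ => f.elim
  RelMap := fun {m} R xs => R.1.Realize fun q : Fin m × Fin nv => (xs q.1).1 q.2

end IndDefs

/-- An SOP₁ pattern witnessed inside the structure `W`. -/
def SOP1PatternIn (L' : FirstOrder.Language.{x, y}) (W : Type z) [L'.Structure W] : Prop :=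
  ∃ (k n : ℕ) (φ : L'.Formula (Fin k ⊕ Fin n)) (bt : List Bool → Fin n → W),
    (∀ σ : ℕ → Bool, FamConsistent fun (i : ℕ) (xx : Fin k → W) =>
      φ.Realize (Sum.elim xx (bt (List.ofFn fun j : Fin i => σ j)))) ∧
    (∀ η₁ η₂ : List Bool, (η₁ ++ [false]) <+: η₂ →
      ¬∃ xx : Fin k → W, φ.Realize (Sum.elim xx (bt η₂)) ∧
        φ.Realize (Sum.elim xx (bt (η₁ ++ [true]))))

/-- The complete theory of `N` is NSOP₁: no SOP₁ pattern in any elementarily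
equivalent structure. -/
def IsNSOP1Th (L' : FirstOrder.Language.{x, y}) (N : Type z) [L'.Structure N] : Prop :=
  ¬∃ (W : Type (max x y z)) (S : L'.Structure W),
    L'.completeTheory N = @Language.completeTheory L' W S ∧ @SOP1PatternIn L' W S

/-- The formula `φ(x̄, ȳ)` has the tree property, witnessed in `W`. -/
def FormulaTPIn (L' : FirstOrder.Language.{x, y}) (W : Type z) [L'.Structure W]
    {k n : ℕ} (φ : L'.Formula (Fin k ⊕ Fin n)) : Prop :=
  ∃ (kk : ℕ) (bt : List ℕ → Fin n → W),
    (∀ σ : ℕ → ℕ, FamConsistent fun (i : ℕ) (xx : Fin k → W) =>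
      φ.Realize (Sum.elim xx (bt (List.ofFn fun j : Fin i => σ j)))) ∧
    (∀ η : List ℕ, FamKInconsistent kk fun (j : ℕ) (xx : Fin k → W) =>
      φ.Realize (Sum.elim xx (bt (η ++ [j]))))

/-- The formula `φ(x̄, ȳ)` has SOP₁, witnessed in `W`. -/
def FormulaSOP1In (L' : FirstOrder.Language.{x, y}) (W : Type z) [L'.Structure W]
    {k n : ℕ} (φ : L'.Formula (Fin k ⊕ Fin n)) : Prop :=
  ∃ bt : List Bool → Fin n → W,
    (∀ σ : ℕ → Bool, FamConsistent fun (i : ℕ) (xx : Fin k → W) =>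
      φ.Realize (Sum.elim xx (bt (List.ofFn fun j : Fin i => σ j)))) ∧
    (∀ η₁ η₂ : List Bool, (η₁ ++ [false]) <+: η₂ →
      ¬∃ xx : Fin k → W, φ.Realize (Sum.elim xx (bt η₂)) ∧
        φ.Realize (Sum.elim xx (bt (η₁ ++ [true]))))

/-- Longest common prefix (meet in the tree `2^{<ω}`). -/
def meet : List Bool → List Bool → List Bool
  | a :: as, b :: bs => if a = b then a :: meet as bs else []
  | _, _ => []

/-- Strict tree order (strict prefix) on `2^{<ω}`. -/
def StrictPrefix (η ν : List Bool) : Prop := η <+: ν ∧ η ≠ ν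

/-- Lexicographic order on `2^{<ω}`. -/
def LexLt (η ν : List Bool) : Prop :=
  StrictPrefix η ν ∨ ((meet η ν ++ [false]) <+: η ∧ (meet η ν ++ [true]) <+: ν)

/-- The meet `c 0 ∧ … ∧ c k`. -/
def meetInit (c : ℕ → List Bool) : ℕ → List Bool
  | 0 => c 0
  | k + 1 => meet (meetInit c k) (c (k + 1))

/-- `c 0, …, c (l-1)` is a descending comb: a lexicographically increasing antichain
whose successive meets form a strictly descending chain in the tree order. -/
def IsDescendingComb (l : ℕ) (c : ℕ → List Bool) : Prop :=
  (∀ i j, i < l → j < l → i ≠ j → ¬(c i <+: c j)) ∧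
  (∀ i j, i < j → j < l → LexLt (c i) (c j)) ∧
  (∀ k, k + 1 < l → StrictPrefix (meetInit c (k + 1)) (meetInit c k))

section DCTP

variable (L : FirstOrder.Language.{u, v}) (𝕄 : Type w) [L.Structure 𝕄]

/-- `T` has `k`-DCTP₂. -/
def HasKDCTP2 (k : ℕ) : Prop :=
  ∃ (kx ny : ℕ) (φ : ParamFormula L 𝕄 (Fin kx ⊕ Fin ny)) (b : List Bool → Fin ny → 𝕄),
    (∀ σ : ℕ → Bool, FamKInconsistent k fun (n : ℕ) (xx : Fin kx → 𝕄) =>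
      (φ.subst (b (List.ofFn fun i : Fin n => σ i))).Realize xx) ∧
    (∀ (l : ℕ) (c : ℕ → List Bool), IsDescendingComb l c →
      ∃ xx : Fin kx → 𝕄, ∀ i < l, (φ.subst (b (c i))).Realize xx)

/-- `T` is N-ω-DCTP₂: it does not have `k`-DCTP₂ for any `k`. -/
def NOmegaDCTP2 : Prop := ∀ k : ℕ, ¬HasKDCTP2 L 𝕄 k

/-- A generic triple of sets of realizations of three partial types: the three sets
begin mutually indiscernible invariant Morley sequences over `M`. -/
def GenericTriple (M : Set 𝕄) {ι₁ ι₂ ι₃ : Type w} {nv₁ nv₂ nv₃ : ℕ}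
    (A : ι₁ → Fin nv₁ → 𝕄) (B : ι₂ → Fin nv₂ → 𝕄) (C : ι₃ → Fin nv₃ → 𝕄) : Prop :=
  ∃ (IA : ℕ → ι₁ → Fin nv₁ → 𝕄) (IB : ℕ → ι₂ → Fin nv₂ → 𝕄) (IC : ℕ → ι₃ → Fin nv₃ → 𝕄),
    IA 0 = A ∧ IB 0 = B ∧ IC 0 = C ∧
    IsInvMorleyOver L 𝕄 M (fun i => flat (IA i)) ∧
    IsInvMorleyOver L 𝕄 M (fun i => flat (IB i)) ∧
    IsInvMorleyOver L 𝕄 M (fun i => flat (IC i)) ∧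
    IndiscernibleOver L 𝕄
      (M ∪ Set.range (flat fun i => flat (IB i)) ∪ Set.range (flat fun i => flat (IC i)))
      (fun i => flat (IA i)) ∧
    IndiscernibleOver L 𝕄
      (M ∪ Set.range (flat fun i => flat (IA i)) ∪ Set.range (flat fun i => flat (IC i)))
      (fun i => flat (IB i)) ∧
    IndiscernibleOver L 𝕄
      (M ∪ Set.range (flat fun i => flat (IA i)) ∪ Set.range (flat fun i => flat (IB i)))
      (fun i => flat (IC i))

end DCTP

/-- The language of hypergraph sequences: one `n`-ary relation symbol for each `n`. -/
def hgLang : FirstOrder.Language.{0, 0} := ⟨fun _ => Empty, fun _ => PUnit⟩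

section Hypergraph

variable (V : Type z) [hgLang.Structure V]

/-- The `n`-ary edge relation of a hypergraph sequence. -/
def hgRel {n : ℕ} (v : Fin n → V) : Prop :=
  @Structure.RelMap hgLang V _ n PUnit.unit v

/-- A family of vertices is a clique: every tuple of its members is an edge. -/
def IsClique {ι : Type*} (a : ι → V) : Prop :=
  ∀ (n : ℕ) (f : Fin n → ι), hgRel V fun j => a (f j)

/-- A family of vertices is a `k`-anticlique: no `k`-tuple of its members (with
pairwise distinct indices) is an edge. -/
def IsAnticlique (k : ℕ) {ι : Type*} (a : ι → V) : Prop :=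
  ∀ f : Fin k → ι, Function.Injective f → ¬hgRel V fun j => a (f j)

/-- The hypergraph sequence has MTP. -/
def HasMTP : Prop :=
  ∃ (k : ℕ) (bt : List ℕ → V),
    (∀ σ : ℕ → ℕ, IsClique V fun n : ℕ => bt (List.ofFn fun j : Fin n => σ j)) ∧
    (∀ η : List ℕ, IsAnticlique V k fun n : ℕ => bt (η ++ [n]))

/-- The hypergraph sequence has an `(ω, ω, 1)`-array. -/
def HasOmegaArray : Prop :=
  ∃ (k : ℕ) (bt : ℕ → ℕ → V),
    (∀ i : ℕ, IsClique V (bt i)) ∧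
    (∀ σ : ℕ → ℕ, IsAnticlique V k fun i : ℕ => bt i (σ i))

/-- The hypergraph sequence has MSOP₁. -/
def HasMSOP1 : Prop :=
  ∃ bt : List Bool → V,
    (∀ σ : ℕ → Bool, IsClique V fun n : ℕ => bt (List.ofFn fun j : Fin n => σ j)) ∧
    (∀ η₁ η₂ : List Bool, (η₁ ++ [false]) <+: η₂ →
      IsAnticlique V 2 ![bt η₂, bt (η₁ ++ [true])])

/-- The hypergraph sequence has ω-MDCTP₂. -/
def HasOmegaMDCTP2 : Prop :=
  ∃ (k : ℕ) (bt : List Bool → V),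
    (∀ σ : ℕ → Bool, IsAnticlique V k fun n : ℕ => bt (List.ofFn fun j : Fin n => σ j)) ∧
    (∀ (l : ℕ) (c : ℕ → List Bool), IsDescendingComb l c →
      IsClique V fun i : Fin l => bt (c i))

/-- The hypergraph sequence has the compatible order property. -/
def HasCompatibleOrderProperty : Prop :=
  ∃ c d : ℕ → V,
    (∀ m n : ℕ, m < n →
      IsClique V fun i : Fin (n + 1) => if (i : ℕ) ≤ m then d i else c i) ∧
    (∀ m n : ℕ, m < n → ¬hgRel V ![c m, d n])

end Hypergraph

/-!
Internally NSOP₁ means that Kim-independence is well behaved in every structure `N` elementarily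
equivalent to `M_p`: Kim's lemma, symmetry and the independence theorem hold there. All three are
phrased with ultrafilters. The type of an ultrafilter on a power of `N` is its trace on the
definable sets, and the iterated tensor powers of the ultrafilter are its Morley sequences, so that
no saturation of `N` is needed.

Suppose that `φ` has a SOP₁ tree among the realizations of `p`. By pigeonhole there are, along a
path of the tree, two sequences of nodes with the same type over what precedes them, the first one
running along a path and the second one pairwise inconsistent. In an elementary extension of `M_p`
they give two ultrafilters of the same type. Alternating Kim's lemma, symmetry and the independence
theorem yields `c₀, …, cₙ₋₁` and `d₀, …, dₙ₋₁` such that `φ` is consistent along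
`d₀, …, dₘ₋₁, cₘ, …, cₙ₋₁` for each `m`, but inconsistent for each pair `c_i, d_k` with `i < k`.

The relation `φ(x, c') ∧ φ(x', d) ∧ ¬∃ y, φ(y, c) ∧ φ(y, d')` between `(x, c, d)` and
`(x', c', d')` then has arbitrarily long finite chains, hence an infinite one. It has no 3-cycles:
in a cycle `e₁, e₂, e₃` the `x`-part of `e₃` is such a `y` for the pair `e₁, e₂`. This is SOP₃.
-/

/-! ### Finite powers and definability with parameters -/

section Definability

/-- An identification of `X` with a finite cartesian power of `N`, along which definability in `N`
is transported to `X`. -/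
class FinPower (N : Type w) (X : Type*) where
  Index : Type
  finite_index : Finite Index
  coords : X ≃ (Index → N)

attribute [instance] FinPower.finite_index

open FinPower

instance finPowerSelf (N : Type w) : FinPower N N :=
  ⟨Unit, inferInstance, (Equiv.funUnique Unit N).symm⟩

instance finPowerProd (N : Type w) {X : Type*} {Y : Type*} [FinPower N X] [FinPower N Y] :
    FinPower N (X × Y) :=
  ⟨Index N X ⊕ Index N Y, inferInstance,
    (Equiv.prodCongr coords coords).trans (Equiv.sumArrowEquivProdArrow _ _ _).symm⟩

instance finPowerPi (N : Type w) {X : Type*} [FinPower N X] (m : ℕ) : FinPower N (Fin m → X) :=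
  ⟨Fin m × Index N X, inferInstance,
    (Equiv.piCongrRight fun _ => coords (N := N)).trans (Equiv.curry _ _ _).symm⟩

variable (L : FirstOrder.Language.{x, y}) (N : Type w) [L.Structure N]
variable {X Y Z W : Type*} [FinPower N X] [FinPower N Y] [FinPower N Z] [FinPower N W]

/-- Maps between finite powers of `N` that are definable with parameters. -/
@[fun_prop]
def DefMap (f : X → Y) : Prop :=
  (Set.univ : Set N).DefinableMap L fun v => coords (f (coords.symm v))

/-- Predicates on finite powers of `N` that are definable with parameters. -/
def DefPred (p : X → Prop) : Prop :=
  (Set.univ : Set N).Definable L {v | p ((coords (N := N)).symm v)}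

variable {L N}

namespace DefMap

@[fun_prop]
theorem id : DefMap L N (fun a : X => a) := fun j => by
  simpa only [Equiv.apply_symm_apply] using Set.DefinableFun.proj L

@[fun_prop]
theorem const (c : Y) : DefMap L N (fun _ : X => c) := fun _ =>
  L.definableFun_const _ (Set.mem_univ _)

@[fun_prop]
theorem comp {g : Y → Z} {f : X → Y} (hg : DefMap L N g) (hf : DefMap L N f) :
    DefMap L N (fun a => g (f a)) := fun j => by
  simpa only [Equiv.symm_apply_apply] using (hg j).comp hf

@[fun_prop]
theorem fst {f : X → Y × Z} (hf : DefMap L N f) : DefMap L N (fun a => (f a).1) :=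
  fun j => hf (Sum.inl j)

@[fun_prop]
theorem snd {f : X → Y × Z} (hf : DefMap L N f) : DefMap L N (fun a => (f a).2) :=
  fun j => hf (Sum.inr j)

@[fun_prop]
theorem prodMk {f : X → Y} {g : X → Z} (hf : DefMap L N f) (hg : DefMap L N g) :
    DefMap L N (fun a => (f a, g a)) :=
  Sum.rec hf hg

@[fun_prop]
theorem pi {m : ℕ} {f : X → Fin m → Y} (hf : ∀ i, DefMap L N (fun a => f a i)) :
    DefMap L N (fun a i => f a i) :=
  fun ⟨i, j⟩ => hf i j

@[fun_prop]
theorem apply {m : ℕ} (i : Fin m) : DefMap L N (fun a : Fin m → Y => a i) :=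
  fun j => (DefMap.id (L := L) (N := N) (X := Fin m → Y)) (i, j)

@[fun_prop]
theorem ite (c : Prop) [Decidable c] {f g : X → Y} (hf : DefMap L N f) (hg : DefMap L N g) :
    DefMap L N (fun a => if c then f a else g a) := by
  split_ifs <;> assumption

end DefMap

namespace DefPred

variable {p q : X → Prop}

theorem of_iff (hp : DefPred L N p) (h : ∀ a, q a ↔ p a) : DefPred L N q := by
  rwa [funext fun a => propext (h a)]

theorem comp {p : Y → Prop} (hp : DefPred L N p) (f : X → Y)
    (hf : DefMap L N f := by fun_prop) : DefPred L N fun a => p (f a) := by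
  simpa only [DefPred, Set.preimage_ofPred_eq, Equiv.symm_apply_apply] using
    Set.Definable.preimage_map hf hp

theorem not (hp : DefPred L N p) : DefPred L N fun a => ¬p a := Set.Definable.compl hp

theorem and (hp : DefPred L N p) (hq : DefPred L N q) : DefPred L N fun a => p a ∧ q a :=
  Set.Definable.inter hp hq

theorem or (hp : DefPred L N p) (hq : DefPred L N q) : DefPred L N fun a => p a ∨ q a :=
  Set.Definable.union hp hq

theorem imp (hp : DefPred L N p) (hq : DefPred L N q) : DefPred L N fun a => p a → q a :=
  (hp.not.or hq).of_iff fun _ => imp_iff_not_or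

theorem forall_finite {ι : Type*} [Finite ι] {p : ι → X → Prop} (hp : ∀ i, DefPred L N (p i)) :
    DefPred L N fun a => ∀ i, p i a := by
  simpa only [DefPred, Set.ofPred_forall] using Set.definable_iInter_of_finite hp

theorem ex {p : X → Y → Prop} (hp : DefPred L N fun q : X × Y => p q.1 q.2) :
    DefPred L N fun a => ∃ b, p a b := by
  unfold DefPred
  convert! Set.Definable.exists_of_finite hp using 1
  ext v
  exact (coords (N := N) (X := Y)).exists_congr_left (p := p ((coords (N := N)).symm v))

theorem const (c : Prop) : DefPred L N fun _ : X => c := by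
  by_cases h : c
  · simpa only [DefPred, h] using! Set.definable_univ
  · simpa only [DefPred, h] using! Set.definable_empty

theorem eq {f g : X → Y} (hf : DefMap L N f := by fun_prop) (hg : DefMap L N g := by fun_prop) :
    DefPred L N fun a => f a = g a := by
  have hcoords : Set.univ.Definable L
      {v | ∀ i, coords (N := N) (f ((coords (N := N)).symm v)) i =
        coords (g (coords.symm v)) i} := by
    rw [Set.ofPred_forall]
    exact Set.definable_iInter_of_finite fun i => (hf i).ofPred_eq (hg i)
  simpa only [DefPred, ← funext_iff, EmbeddingLike.apply_eq_iff_eq] using hcoords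

end DefPred

/-- Binary relations between finite powers of `N` that are definable with parameters. -/
def DefRel (L : FirstOrder.Language.{x, y}) (N : Type w) [L.Structure N] [FinPower N X]
    [FinPower N Y] (ρ : X → Y → Prop) : Prop :=
  DefPred L N fun q : X × Y => ρ q.1 q.2

theorem DefRel.comp {ρ : X → Y → Prop} (h : DefRel L N ρ) (f : Z → X) (g : Z → Y)
    (hf : DefMap L N f := by fun_prop) (hg : DefMap L N g := by fun_prop) :
    DefPred L N fun c => ρ (f c) (g c) :=
  DefPred.comp h (fun c => (f c, g c))

end Definability

/-! ### Powers of ultrafilters -/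

section Ultrafilters

open Filter

variable {X : Type*} {Y : Type*} {O : Type*} {O' : Type*}

/-- The tensor product of two ultrafilters, the first factor being the outer one: it plays the role
of the type of a pair whose second entry realizes `G` generically over the first. -/
noncomputable def tensor (F : Ultrafilter X) (G : Ultrafilter Y) : Ultrafilter (X × Y) :=
  F.bind fun a => G.map (Prod.mk a)

/-- The `m`-fold tensor power of an ultrafilter, playing the role of the type of a Morley sequence
of length `m`. -/
noncomputable def power (F : Ultrafilter X) : (m : ℕ) → Ultrafilter (Fin m → X)
  | 0 => pure Fin.elim0
  | m + 1 => (tensor F (power F m)).map fun q => Fin.cons q.1 q.2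

/-- The `m`-fold tensor power of an ultrafilter, living on lists of length `m`. -/
noncomputable def listPower (F : Ultrafilter X) (m : ℕ) : Ultrafilter (List X) :=
  (power F m).map List.ofFn

/-- For every `m`, almost every `m`-tuple along `F` is simultaneously `ρ`-related to one object. -/
def ConsistentAlong (F : Ultrafilter X) (ρ : X → O → Prop) : Prop :=
  ∀ m, ∀ᶠ (l : List X) in listPower F m, ∃ o, ∀ a ∈ l, ρ a o

variable {F : Ultrafilter X} {G : Ultrafilter Y}

theorem eventually_map_ultrafilter {f : X → Y} {p : Y → Prop} :
    (∀ᶠ b in F.map f, p b) ↔ ∀ᶠ a in F, p (f a) := Iff.rfl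

theorem eventually_tensor {p : X × Y → Prop} :
    (∀ᶠ q in tensor F G, p q) ↔ ∀ᶠ a in F, ∀ᶠ b in G, p (a, b) := Iff.rfl

theorem map_fst_tensor (F : Ultrafilter X) (G : Ultrafilter Y) :
    (tensor F G).map Prod.fst = F :=
  Ultrafilter.ext fun s => by
    change (∀ᶠ a in F, ∀ᶠ (_ : Y) in G, a ∈ s) ↔ ∀ᶠ a in F, a ∈ s
    simp only [eventually_const]

theorem map_snd_tensor (F : Ultrafilter X) (G : Ultrafilter Y) :
    (tensor F G).map Prod.snd = G :=
  Ultrafilter.ext fun s => by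
    change (∀ᶠ (_ : X) in F, ∀ᶠ b in G, b ∈ s) ↔ ∀ᶠ b in G, b ∈ s
    simp only [eventually_const]

theorem eventually_power_succ {m : ℕ} {p : (Fin (m + 1) → X) → Prop} :
    (∀ᶠ (v : Fin (m + 1) → X) in power F (m + 1), p v) ↔
      ∀ᶠ a in F, ∀ᶠ (v : Fin m → X) in power F m, p (Fin.cons a v) :=
  Iff.rfl

theorem eventually_power_apply {m : ℕ} (i : Fin m) {p : X → Prop} :
    (∀ᶠ (v : Fin m → X) in power F m, p (v i)) ↔ ∀ᶠ a in F, p a := by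
  induction m with
  | zero => exact i.elim0
  | succ m ih =>
    rw [eventually_power_succ]
    refine Fin.cases ?_ (fun i => ?_) i
    · simp only [Fin.cons_zero, eventually_const]
    · simp only [Fin.cons_succ, ih i, eventually_const]

theorem eventually_listPower {m : ℕ} {p : List X → Prop} :
    (∀ᶠ (l : List X) in listPower F m, p l) ↔
      ∀ᶠ (v : Fin m → X) in power F m, p (List.ofFn v) :=
  Iff.rfl

theorem eventually_listPower_zero {p : List X → Prop} :
    (∀ᶠ (l : List X) in listPower F 0, p l) ↔ p [] := Iff.rfl

theorem eventually_listPower_succ {m : ℕ} {p : List X → Prop} :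
    (∀ᶠ (l : List X) in listPower F (m + 1), p l) ↔
      ∀ᶠ a in F, ∀ᶠ (l : List X) in listPower F m, p (a :: l) := by
  simp only [eventually_listPower, eventually_power_succ, List.ofFn_cons]

theorem eventually_listPower_one {p : List X → Prop} :
    (∀ᶠ (l : List X) in listPower F 1, p l) ↔ ∀ᶠ a in F, p [a] := eventually_listPower_succ

theorem eventually_listPower_add {m n : ℕ} {p : List X → Prop} :
    (∀ᶠ (l : List X) in listPower F (m + n), p l) ↔
      ∀ᶠ (l : List X) in listPower F m, ∀ᶠ (l' : List X) in listPower F n, p (l ++ l') := by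
  induction m generalizing p with
  | zero => rw [Nat.zero_add]; exact Iff.rfl
  | succ m ih =>
    rw [Nat.add_right_comm]
    simp only [eventually_listPower_succ, ih, List.cons_append]

theorem eventually_listPower_map {f : X → Y} {m : ℕ} {p : List Y → Prop} :
    (∀ᶠ (l : List Y) in listPower (F.map f) m, p l) ↔
      ∀ᶠ (l : List X) in listPower F m, p (l.map f) := by
  induction m generalizing p with
  | zero => exact Iff.rfl
  | succ m ih =>
    simp only [eventually_listPower_succ, eventually_map_ultrafilter, ih, List.map_cons]

theorem eventually_listPower_flatMap {f : Y → List X} {k : ℕ} (h : G.map f = listPower F k)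
    {m : ℕ} {p : List X → Prop} :
    (∀ᶠ (l : List Y) in listPower G m, p (l.flatMap f)) ↔
      ∀ᶠ (l : List X) in listPower F (m * k), p l := by
  induction m generalizing p with
  | zero => rw [Nat.zero_mul]; exact Iff.rfl
  | succ m ih =>
    rw [eventually_listPower_succ, Nat.succ_mul, Nat.add_comm, eventually_listPower_add, ← h,
      eventually_map_ultrafilter]
    exact eventually_congr (.of_forall fun b => ih (p := fun l => p (f b ++ l)))

theorem map_append_tensor_listPower (F : Ultrafilter X) (m n : ℕ) :
    (tensor (listPower F m) (listPower F n)).map (fun q => q.1 ++ q.2) = listPower F (m + n) :=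
  Ultrafilter.ext fun s => (eventually_listPower_add (p := (· ∈ s))).symm

theorem map_cons_tensor_listPower (F : Ultrafilter X) (m : ℕ) :
    (tensor F (listPower F m)).map (fun q => q.1 :: q.2) = listPower F (m + 1) :=
  Ultrafilter.ext fun s => (eventually_listPower_succ (p := (· ∈ s))).symm

theorem map_pair_tensor_self (F : Ultrafilter X) :
    (tensor F F).map (fun q => [q.1, q.2]) = listPower F 2 :=
  Ultrafilter.ext fun s => by
    rw [← Ultrafilter.mem_coe, ← Ultrafilter.mem_coe]
    exact Iff.symm (eventually_listPower_succ (m := 1) (p := (· ∈ s)))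

/-- Gluing: two filters are the marginals of an ultrafilter on pairs concentrated on `R`. -/
theorem exists_ultrafilter_prod {A : Filter X} {B : Filter Y} {R : X → Y → Prop}
    (h : ∀ s ∈ A, ∀ t ∈ B, ∃ a ∈ s, ∃ b ∈ t, R a b) :
    ∃ K : Ultrafilter (X × Y), (K.map Prod.fst : Filter X) ≤ A ∧
      (K.map Prod.snd : Filter Y) ≤ B ∧ ∀ᶠ (q : X × Y) in K, R q.1 q.2 := by
  have : ((A ×ˢ B) ⊓ 𝓟 {q | R q.1 q.2}).NeBot := by
    refine inf_principal_neBot_iff.mpr fun U hU => ?_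
    obtain ⟨s, hs, t, ht, hst⟩ := mem_prod_iff.mp hU
    obtain ⟨a, ha, b, hb, hab⟩ := h s hs t ht
    exact ⟨(a, b), hst ⟨ha, hb⟩, hab⟩
  obtain ⟨K, hK⟩ := Ultrafilter.exists_le ((A ×ˢ B) ⊓ 𝓟 {q | R q.1 q.2})
  exact ⟨K, tendsto_fst.mono_left (hK.trans inf_le_left),
    tendsto_snd.mono_left (hK.trans inf_le_left), hK.trans inf_le_right (mem_principal_self _)⟩

namespace ConsistentAlong

variable {ρ : X → O → Prop}

theorem mono {ρ' : X → O' → Prop} (h : ConsistentAlong F ρ)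
    (hρ : ∀ o, ∃ o', ∀ a, ρ a o → ρ' a o') : ConsistentAlong F ρ' := fun m => by
  filter_upwards [h m] with l ⟨o, ho⟩
  exact (hρ o).imp fun o' ho' a ha => ho' a (ho a ha)

theorem map {f : X → Y} {ρ : Y → O → Prop} :
    ConsistentAlong (F.map f) ρ ↔ ConsistentAlong F fun a => ρ (f a) := by
  simp only [ConsistentAlong, eventually_listPower_map, List.forall_mem_map]

theorem eventually_exists (h : ConsistentAlong F ρ) : ∀ᶠ a in F, ∃ o, ρ a o := by
  simpa only [eventually_listPower_one, List.forall_mem_singleton] using h 1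

theorem regroup {f : Y → List X} {k : ℕ} (hf : G.map f = listPower F k)
    (h : ConsistentAlong F ρ) : ConsistentAlong G fun b o => ∀ a ∈ f b, ρ a o := fun m => by
  filter_upwards [(eventually_listPower_flatMap hf).mpr (h (m * k))] with l ⟨o, ho⟩
  exact ⟨o, fun b hb a ha => ho a (List.mem_flatMap.mpr ⟨b, hb, ha⟩)⟩

theorem and_left (h : ConsistentAlong F ρ) {θ : X → Prop} (hθ : ∀ᶠ a in F, θ a) :
    ConsistentAlong F fun a o => ρ a o ∧ θ a := fun m => by
  have hall : ∀ᶠ (l : List X) in listPower F m, ∀ a ∈ l, θ a := by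
    simp only [eventually_listPower, List.forall_mem_ofFn_iff, eventually_all]
    exact fun i => (eventually_power_apply i).mpr hθ
  filter_upwards [h m, hall] with l ⟨o, ho⟩ hl
  exact ⟨o, fun a ha => ⟨ho a ha, hl a ha⟩⟩

theorem tensor_self (h : ConsistentAlong F ρ) :
    ConsistentAlong (tensor F F) fun q o => ρ q.1 o ∧ ρ q.2 o := by
  simpa only [List.forall_mem_cons, List.not_mem_nil, false_imp_iff, implies_true,
    and_true] using h.regroup (map_pair_tensor_self F)

end ConsistentAlong

end Ultrafilters

section DefinableEquivalence

open Filter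

variable (L : FirstOrder.Language.{x, y}) (N : Type w) [L.Structure N]
variable {X Y : Type*} [FinPower N X] [FinPower N Y]

/-- Ultrafilters containing the same definable sets, i.e. inducing the same type over `N`. -/
def DefEquiv (F G : Ultrafilter X) : Prop :=
  ∀ p : X → Prop, DefPred L N p → (∀ᶠ a in F, p a) → ∀ᶠ a in G, p a

/-- The filter generated by the definable members of an ultrafilter. -/
def definableFilter (F : Ultrafilter X) : Filter X where
  sets := {s | ∃ p : X → Prop, DefPred L N p ∧ (∀ᶠ a in F, p a) ∧ ∀ a, p a → a ∈ s}
  univ_sets := ⟨fun _ => True, .const True, .of_forall fun _ => trivial, fun _ _ => trivial⟩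
  sets_of_superset := fun ⟨p, hp, hF, hs⟩ hst => ⟨p, hp, hF, fun a ha => hst (hs a ha)⟩
  inter_sets := fun ⟨_, hp, hF, hs⟩ ⟨_, hp', hF', hs'⟩ =>
    ⟨_, hp.and hp', hF.and hF', fun a ha => ⟨hs a ha.1, hs' a ha.2⟩⟩

variable {L N} {F G H : Ultrafilter X}

namespace DefEquiv

theorem refl (F : Ultrafilter X) : DefEquiv L N F F := fun _ _ h => h

theorem eventually_iff (h : DefEquiv L N F G) {p : X → Prop} (hp : DefPred L N p) :
    (∀ᶠ a in F, p a) ↔ ∀ᶠ a in G, p a :=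
  ⟨h p hp, not_imp_not.mp fun hF =>
    Ultrafilter.eventually_not.mp (h _ hp.not (Ultrafilter.eventually_not.mpr hF))⟩

theorem symm (h : DefEquiv L N F G) : DefEquiv L N G F := fun _ hp => (h.eventually_iff hp).mpr

theorem trans (h : DefEquiv L N F G) (h' : DefEquiv L N G H) : DefEquiv L N F H :=
  fun p hp hF => h' p hp (h p hp hF)

theorem map (h : DefEquiv L N F G) (f : X → Y) (hf : DefMap L N f := by fun_prop) :
    DefEquiv L N (F.map f) (G.map f) :=
  fun _ hp hF => h _ (hp.comp f hf) hF

theorem tensor (F : Ultrafilter Y) (h : DefEquiv L N G H) :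
    DefEquiv L N (tensor F G) (tensor F H) := fun _ hp hF => by
  rw [eventually_tensor] at hF ⊢
  filter_upwards [hF] with a ha
  exact h _ (hp.comp (Prod.mk a)) ha

theorem of_le_definableFilter (h : (F : Filter X) ≤ definableFilter L N G) : DefEquiv L N G F :=
  fun _ hp hG => h ⟨_, hp, hG, fun _ h => h⟩

/-- Types `G` and `F` such that every formula of `G` is compatible with `F` along `R` have a joint
realization in `R`; the first marginal is prescribed exactly, the second up to `DefEquiv`. -/
theorem exists_prod {F : Ultrafilter Y} {G : Ultrafilter X} {R : X → Y → Prop} (hR : DefRel L N R)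
    (h : ∀ θ : X → Prop, DefPred L N θ → (∀ᶠ a in G, θ a) → ∀ᶠ b in F, ∃ a, θ a ∧ R a b) :
    ∃ K : Ultrafilter (X × Y), K.map Prod.fst = G ∧ DefEquiv L N F (K.map Prod.snd) ∧
      ∀ᶠ (q : X × Y) in K, R q.1 q.2 := by
  have compatible : ∀ s ∈ (G : Filter X), ∀ t ∈ definableFilter L N F,
      ∃ a ∈ s, ∃ b ∈ t, R a b := by
    rintro s hs t ⟨p, hp, hpF, hpt⟩
    have hdef : DefPred L N fun a => ∃ b, p b ∧ R a b :=
      .ex (p := fun a b => p b ∧ R a b) ((hp.comp Prod.snd).and hR)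
    rcases G.em fun a => ∃ b, p b ∧ R a b with hG | hG
    · obtain ⟨a, ⟨b, hb, hab⟩, ha⟩ := (hG.and hs).exists
      exact ⟨a, ha, b, hpt b hb, hab⟩
    · obtain ⟨b, ⟨a, ha, hab⟩, hb⟩ := ((h _ hdef.not hG).and hpF).exists
      exact absurd ⟨b, hb, hab⟩ ha
  obtain ⟨K, hfst, hsnd, hK⟩ := exists_ultrafilter_prod compatible
  exact ⟨K, Ultrafilter.eq_of_le hfst, .of_le_definableFilter hsnd, hK⟩

theorem exists_map_eq {f : X → Y} (hf : DefMap L N f) {G : Ultrafilter Y}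
    (h : DefEquiv L N (F.map f) G) : ∃ K : Ultrafilter X, DefEquiv L N F K ∧ K.map f = G := by
  have hR : DefRel L N fun b a => f a = b := .eq
  obtain ⟨K, hfst, hsnd, hK⟩ := exists_prod (F := F) (G := G) hR fun θ hθ hG => by
    filter_upwards [eventually_map_ultrafilter.mp (h.symm θ hθ hG)] with a ha using ⟨f a, ha, rfl⟩
  refine ⟨K.map Prod.snd, hsnd, ?_⟩
  rw [← hfst, Ultrafilter.map_map]
  exact Ultrafilter.coe_injective (map_congr hK)

end DefEquiv

end DefinableEquivalence

/-! ### SOP₁ trees -/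

section SOP1Trees

open Filter

/-- For every height `s` there is a tree of height `s` whose branches are consistent and which is
inconsistent in the SOP₁ pattern: `η₁⌢1` against everything above `η₁⌢0`. -/
def HasFiniteSOP1Trees {Y O : Type*} (ρ : Y → O → Prop) : Prop :=
  ∀ s : ℕ, ∃ b : List Bool → Y,
    (∀ ν : List Bool, ν.length = s → ∃ o, ∀ η, η ≠ [] → η <+: ν → ρ (b η) o) ∧
    ∀ η₁ η₂ : List Bool, η₂.length ≤ s → η₁ ++ [false] <+: η₂ →
      ¬∃ o, ρ (b η₂) o ∧ ρ (b (η₁ ++ [true])) o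

/-- No definable relation of the structure has finite SOP₁ trees. -/
def HasNoDefinableSOP1Trees (L : FirstOrder.Language.{x, y}) (N : Type w) [L.Structure N] : Prop :=
  ∀ (Y O : Type w) [FinPower N Y] [FinPower N O] (ρ : Y → O → Prop),
    DefRel L N ρ → ¬HasFiniteSOP1Trees ρ

theorem prefix_append_false_cases {η₁ η₂ : List Bool} (h : η₁ ++ [false] <+: η₂) :
    (η₁ = [] ∧ ∃ η, η₂ = false :: η) ∨
      ∃ c η η', η₁ = c :: η ∧ η₂ = c :: η' ∧ η ++ [false] <+: η' := by
  obtain ⟨t, rfl⟩ := h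
  rcases η₁ with _ | ⟨c, η⟩
  · exact .inl ⟨rfl, t, rfl⟩
  · exact .inr ⟨c, η, _, rfl, rfl, t, rfl⟩

variable {L : FirstOrder.Language.{x, y}} {N : Type w} [L.Structure N]
variable {A : Type*} {Y : Type*} {T : Type*} {S : Type*}

/-- In almost every tree `y · t`, all the pairs involved in the SOP₁ pattern up to height `s` are
`I`-related. -/
def Separated (I : Y → Y → Prop) (Z : Ultrafilter T) (y : List Bool → T → Y) (s : ℕ) : Prop :=
  ∀ η₁ η₂ : List Bool, η₂.length ≤ s → η₁ ++ [false] <+: η₂ →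
    ∀ᶠ t in Z, I (y η₂ t) (y (η₁ ++ [true]) t)

/-- In almost every tree, the leaf `x ν` is `R`-related to each node below it except the root. -/
def LeavesRelated (R : A → Y → Prop) (Z : Ultrafilter T) (x : List Bool → T → A)
    (y : List Bool → T → Y) (s : ℕ) : Prop :=
  ∀ ν η : List Bool, ν.length = s → η ≠ [] → η <+: ν → ∀ᶠ t in Z, R (x ν t) (y η t)

/-- All nodes up to height `s`, except the root, have type `G`. -/
def NodesDistributed (L : FirstOrder.Language.{x, y}) (N : Type w) [L.Structure N] [FinPower N Y]
    (G : Ultrafilter Y) (Z : Ultrafilter T) (y : List Bool → T → Y) (s : ℕ) : Prop :=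
  ∀ η, η ≠ [] → η.length ≤ s → DefEquiv L N G (Z.map (y η))

theorem hasFiniteSOP1Trees_of_eventually {O : Type*} {ρ : Y → O → Prop}
    (h : ∀ s, ∃ (T : Type w) (Z : Ultrafilter T) (y : List Bool → T → Y),
      (∀ ν : List Bool, ν.length = s → ∀ᶠ t in Z, ∃ o, ∀ η, η ≠ [] → η <+: ν → ρ (y η t) o) ∧
      Separated (fun b b' => ¬∃ o, ρ b o ∧ ρ b' o) Z y s) :
    HasFiniteSOP1Trees ρ := fun s => by
  obtain ⟨T, Z, y, hcon, hsep⟩ := h s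
  have hpairs := (List.finite_length_le Bool s).prod (List.finite_length_le Bool s)
  have hcon' : ∀ᶠ t in Z, ∀ ν ∈ {ν : List Bool | ν.length = s},
      ∃ o, ∀ η, η ≠ [] → η <+: ν → ρ (y η t) o :=
    (eventually_all_finite (List.finite_length_eq Bool s)).mpr hcon
  have hsep' : ∀ᶠ t in Z, ∀ q ∈ {η : List Bool | η.length ≤ s} ×ˢ {η : List Bool | η.length ≤ s},
      q.1 ++ [false] <+: q.2 → ¬∃ o, ρ (y q.2 t) o ∧ ρ (y (q.1 ++ [true]) t) o :=
    (eventually_all_finite hpairs).mpr fun q hq =>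
      eventually_imp_distrib_left.mpr (hsep q.1 q.2 hq.2)
  obtain ⟨t, htcon, htsep⟩ := (hcon'.and hsep').exists
  refine ⟨(y · t), htcon, fun η₁ η₂ hle hpre => htsep (η₁, η₂) ⟨?_, hle⟩ hpre⟩
  exact ((List.prefix_append η₁ [false]).trans hpre).length_le.trans hle

theorem LeavesRelated.eventually_exists {R : A → Y → Prop} {Z : Ultrafilter T}
    {x : List Bool → T → A} {y : List Bool → T → Y} {s : ℕ} (h : LeavesRelated R Z x y s)
    {ν : List Bool} (hν : ν.length = s) :
    ∀ᶠ t in Z, ∃ a, ∀ η, η ≠ [] → η <+: ν → R a (y η t) := by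
  have hall : ∀ᶠ t in Z, ∀ η ∈ {η : List Bool | η.length ≤ s}, η ≠ [] → η <+: ν →
      R (x ν t) (y η t) :=
    (eventually_all_finite (List.finite_length_le Bool s)).mpr fun η _ =>
      eventually_imp_distrib_left.mpr fun hη =>
        eventually_imp_distrib_left.mpr fun hpre => h ν η hν hη hpre
  filter_upwards [hall] with t ht
  exact ⟨x ν t, fun η hη hpre => ht η (hpre.length_le.trans hν.le) hη hpre⟩

/-- Adds the first coordinate as a root to a tree. -/
def graft (y : List Bool → T → Y) : List Bool → Y × T → Y
  | [], q => q.1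
  | c :: η, q => y (c :: η) q.2

/-- The coordinate of a pair selected by `c`. -/
def side (c : Bool) (q : S × S) : S := bif c then q.1 else q.2

/-- Places two trees side by side above a new root, whose label is irrelevant. -/
def branch (z : List Bool → S → Y) : List Bool → S × S → Y
  | [], q => z [] q.1
  | c :: η, q => z η (side c q)

section Definability

variable [FinPower N Y] [FinPower N T] [FinPower N S]

@[fun_prop]
theorem defMap_side (c : Bool) : DefMap L N (side (S := S) c) := by
  cases c
  · exact .snd .id
  · exact .fst .id

theorem defMap_graft {y : List Bool → T → Y} (hy : ∀ η, DefMap L N (y η)) (η : List Bool) :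
    DefMap L N (graft y η) := by
  rcases η with _ | ⟨c, η⟩
  · exact .fst .id
  · exact (hy _).comp (.snd .id)

theorem defMap_branch {z : List Bool → S → Y} (hz : ∀ η, DefMap L N (z η)) (η : List Bool) :
    DefMap L N (branch z η) := by
  rcases η with _ | ⟨c, η⟩
  · exact (hz _).comp (.fst .id)
  · exact (hz _).comp (defMap_side c)

end Definability

variable [FinPower N A] [FinPower N Y] [FinPower N T]

/-- `J` is the law of a pair of trees which individually have the law `K` of a tree from `Z`
with a root of type `G` added. -/
structure IsDoubling (L : FirstOrder.Language.{x, y}) (N : Type w) [L.Structure N] [FinPower N Y]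
    [FinPower N T] (G : Ultrafilter Y) (Z : Ultrafilter T) (K : Ultrafilter (Y × T))
    (J : Ultrafilter ((Y × T) × (Y × T))) : Prop where
  map_fst : K.map Prod.fst = G
  map_snd : DefEquiv L N Z (K.map Prod.snd)
  map_side : ∀ c, DefEquiv L N K (J.map (side c))

variable {G : Ultrafilter Y} {Z : Ultrafilter T} {K : Ultrafilter (Y × T)}
variable {J : Ultrafilter ((Y × T) × (Y × T))} {y : List Bool → T → Y} {s : ℕ}

theorem NodesDistributed.add_root (h : NodesDistributed L N G Z y s) (hJ : IsDoubling L N G Z K J)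
    (hy : ∀ η, DefMap L N (y η)) {η : List Bool} (hη : η.length ≤ s) :
    DefEquiv L N G (K.map (graft y η)) := by
  rcases η with _ | ⟨c, η⟩
  · exact hJ.map_fst ▸ .refl _
  · exact (h _ (List.cons_ne_nil c η) hη).trans (hJ.map_snd.map _ (hy _))

theorem NodesDistributed.double (h : NodesDistributed L N G Z y s) (hJ : IsDoubling L N G Z K J)
    (hy : ∀ η, DefMap L N (y η)) : NodesDistributed L N G J (branch (graft y)) (s + 1)
  | _ :: η, _, hη => (h.add_root hJ hy (Nat.le_of_succ_le_succ hη)).trans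
      ((hJ.map_side _).map _ (defMap_graft hy η))

theorem Separated.zero {I : Y → Y → Prop} {Z : Ultrafilter T} {y : List Bool → T → Y} :
    Separated I Z y 0 := fun η₁ η₂ hle hpre => by
  have := hpre.length_le
  simp only [List.length_append, List.length_singleton] at this
  omega

theorem Separated.double {I : Y → Y → Prop} (hI : DefRel L N I) (h : Separated I Z y s)
    (hJ : IsDoubling L N G Z K J) (hy : ∀ η, DefMap L N (y η))
    (hroot : ∀ η : List Bool, η.length ≤ s → ∀ᶠ (q : (Y × T) × (Y × T)) in J,
      I (graft y η q.2) q.1.1) :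
    Separated I J (branch (graft y)) (s + 1) := fun η₁ η₂ hle hpre => by
  rcases prefix_append_false_cases hpre with ⟨rfl, η, rfl⟩ | ⟨c, η, η', rfl, rfl, hpre'⟩
  · exact hroot η (Nat.le_of_succ_le_succ hle)
  · have hdef (ξ ξ' : List Bool) :
        DefPred L N fun q : Y × T => I (graft y ξ q) (graft y ξ' q) :=
      hI.comp _ _ (defMap_graft hy ξ) (defMap_graft hy ξ')
    refine (hJ.map_side c) _ (hdef η' (η ++ [true])) ?_
    have hZ := hJ.map_snd _ (hI.comp _ _ (hy η') (hy (η ++ [true])))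
      (h η η' (Nat.le_of_succ_le_succ hle) hpre')
    rcases η' with _ | ⟨_, η'⟩
    · simp only [List.prefix_nil, List.append_eq_nil_iff, List.cons_ne_self, and_false] at hpre'
    · rcases η with _ | ⟨_, η⟩ <;> exact hZ

theorem LeavesRelated.zero {R : A → Y → Prop} {Z : Ultrafilter T} {x : List Bool → T → A}
    {y : List Bool → T → Y} : LeavesRelated R Z x y 0 := fun _ _ hν hη hpre =>
  absurd (List.prefix_nil.mp (List.length_eq_zero_iff.mp hν ▸ hpre)) hη

theorem LeavesRelated.double {R : A → Y → Prop} (hR : DefRel L N R) {x : List Bool → T → A}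
    (h : LeavesRelated R Z x y s) (hJ : IsDoubling L N G Z K J) (hx : ∀ ν, DefMap L N (x ν))
    (hy : ∀ η, DefMap L N (y η))
    (hroot : ∀ ν : List Bool, ν.length = s → ∀ᶠ (q : Y × T) in K, R (x ν q.2) q.1) :
    LeavesRelated R J (branch fun ν q => x ν q.2) (branch (graft y)) (s + 1)
  | [], _, hν, _, _ => absurd hν (Nat.succ_ne_zero s).symm
  | _ :: _, [], _, hη, _ => absurd rfl hη
  | c :: ν, e :: η, hν, _, hpre => by
    obtain ⟨rfl, hpre'⟩ := List.cons_prefix_cons.mp hpre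
    have hν : ν.length = s := Nat.succ_injective hν
    refine (hJ.map_side e) _ (hR.comp (fun q : Y × T => x ν q.2) (graft y η)
      ((hx ν).comp (.snd .id)) (defMap_graft hy η)) ?_
    rcases η with _ | ⟨d, η⟩
    · exact hroot ν hν
    · exact hJ.map_snd _ (hR.comp _ _ (hx ν) (hy _)) (h ν _ hν (List.cons_ne_nil d η) hpre')

end SOP1Trees

/-! ### Kim's lemma -/

section Kim

open Filter

variable {L : FirstOrder.Language.{x, y}} {N : Type w} [L.Structure N]
variable {Y T : Type*} {s : ℕ}

/-- The labels along `ν`, without the root. -/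
def path (s : ℕ) (y : List Bool → T → Y) (ν : List Bool) (t : T) (i : Fin s) : Y :=
  y (ν.take (i + 1)) t

theorem exists_path_eq {ν η : List Bool} (hν : ν.length = s) (hη : η ≠ []) (hpre : η <+: ν)
    (y : List Bool → T → Y) : ∃ i : Fin s, ∀ t, path s y ν t i = y η t := by
  have hpos := List.length_pos_iff.mpr hη
  have hlt : η.length - 1 < s := by have := hpre.length_le; omega
  refine ⟨⟨η.length - 1, hlt⟩, fun t => ?_⟩
  rw [path, Nat.sub_add_cancel hpos, ← List.prefix_iff_eq_take.mp hpre]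

theorem path_branch_graft {ν : List Bool} (hν : ν.length = s) (c : Bool)
    (y : List Bool → T → Y) :
    path (s + 1) (branch (graft y)) (c :: ν) =
      fun q => Fin.cons (side c q).1 (path s y ν (side c q).2) := by
  funext q i
  refine Fin.cases rfl (fun i => ?_) i
  rcases ν with _ | ⟨d, ν⟩
  · exact (hν ▸ i).elim0
  · rfl

variable [FinPower N Y] [FinPower N T]

/-- Every branch of length `s` is a Morley sequence of `G`. -/
def PathsDistributed (L : FirstOrder.Language.{x, y}) (N : Type w) [L.Structure N] [FinPower N Y]
    (G : Ultrafilter Y) (Z : Ultrafilter T) (y : List Bool → T → Y) (s : ℕ) : Prop :=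
  ∀ ν : List Bool, ν.length = s → DefEquiv L N (power G s) (Z.map (path s y ν))

theorem PathsDistributed.double {G : Ultrafilter Y} {Z : Ultrafilter T} {y : List Bool → T → Y}
    {J : Ultrafilter ((Y × T) × (Y × T))} (h : PathsDistributed L N G Z y s)
    (hJ : IsDoubling L N G Z (tensor G Z) J) (hy : ∀ η, DefMap L N (y η)) :
    PathsDistributed L N G J (branch (graft y)) (s + 1)
  | [], hν => absurd hν (Nat.succ_ne_zero s).symm
  | c :: ν, hν => by
    have hν : ν.length = s := Nat.succ_injective hν
    have hcons : DefMap L N fun q : Y × (Fin s → Y) => (Fin.cons q.1 q.2 : Fin (s + 1) → Y) :=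
      .pi <| Fin.cases (.fst .id) fun i => (DefMap.apply i).comp (.snd .id)
    have hpath : DefMap L N (path s y ν) := .pi fun i => hy _
    rw [path_branch_graft hν]
    have hstep : DefMap L N fun q : Y × T => (Fin.cons q.1 (path s y ν q.2) : Fin (s + 1) → Y) :=
      hcons.comp (.prodMk (.fst .id) (hpath.comp (.snd .id)))
    exact ((DefEquiv.tensor G (h ν hν)).map _ hcons).trans ((hJ.map_side c).map _ hstep)

theorem exists_morley_tree {Y : Type w} [FinPower N Y] {V W : Ultrafilter Y}
    (hVW : DefEquiv L N V W) {I : Y → Y → Prop} (hI : DefRel L N I)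
    (hinc : ∀ᶠ a in V, ∀ᶠ b in W, I b a) (s : ℕ) :
    ∃ (T : Type w) (_ : FinPower N T) (Z : Ultrafilter T) (y : List Bool → T → Y),
      (∀ η, DefMap L N (y η)) ∧ NodesDistributed L N W Z y s ∧ PathsDistributed L N W Z y s ∧
      Separated I Z y s := by
  induction s with
  | zero =>
    refine ⟨Y, inferInstance, W, fun _ b => b, fun _ => .id, fun η hη hle => ?_, fun ν _ => ?_,
      .zero⟩
    · exact absurd (List.length_eq_zero_iff.mp (Nat.le_zero.mp hle)) hη
    · exact fun p _ hp => eventually_map_ultrafilter.mpr <| .of_forall fun t => by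
        rwa [Subsingleton.elim (path 0 _ ν t) Fin.elim0]
  | succ s ih =>
    obtain ⟨T, _, Z, y, hy, hnodes, hpaths, hsep⟩ := ih
    have hfst : DefEquiv L N ((tensor W Z).map Prod.fst) V := by
      rw [map_fst_tensor]
      exact hVW.symm
    obtain ⟨K, hK, hKV⟩ := DefEquiv.exists_map_eq (DefMap.fst .id) hfst
    have hJ : IsDoubling L N W Z (tensor W Z) (tensor K (tensor W Z)) :=
      { map_fst := map_fst_tensor W Z
        map_snd := (map_snd_tensor W Z).symm ▸ .refl _
        map_side := fun
          | true => (map_fst_tensor K (tensor W Z)).symm ▸ hK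
          | false => (map_snd_tensor K (tensor W Z)).symm ▸ .refl _ }
    refine ⟨_, inferInstance, tensor K (tensor W Z), branch (graft y),
      defMap_branch (defMap_graft hy), hnodes.double hJ hy, hpaths.double hJ hy,
      hsep.double hI hJ hy fun η hη => ?_⟩
    rw [← hKV, eventually_map_ultrafilter] at hinc
    rw [eventually_tensor]
    filter_upwards [hinc] with q hq
    exact (hnodes.add_root hJ hy hη) _ (hI.comp id fun _ => q.1) hq

/-- Dividing along `W` with respect to parameters `a` which may depend on the height `s`. -/
theorem hasFiniteSOP1Trees_of_inconsistent {Y Q O : Type w} [FinPower N Y] [FinPower N Q]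
    [FinPower N O] {V W : Ultrafilter Y} (hVW : DefEquiv L N V W) {ψ : Y × Q → O → Prop}
    (hψ : DefRel L N ψ)
    (h : ∀ s, ∃ a, (∀ᶠ (v : Fin s → Y) in power W s, ∃ o, ∀ i, ψ (v i, a) o) ∧
      ∀ᶠ b in V, ∀ᶠ b' in W, ¬∃ o, ψ (b', a) o ∧ ψ (b, a) o) :
    HasFiniteSOP1Trees ψ := hasFiniteSOP1Trees_of_eventually fun s => by
  obtain ⟨a, hcon, hinc⟩ := h s
  have hI : DefRel L N fun b b' => ¬∃ o, ψ (b, a) o ∧ ψ (b', a) o :=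
    (DefPred.ex (p := fun (q : Y × Y) o => ψ (q.1, a) o ∧ ψ (q.2, a) o)
      ((hψ.comp (fun q : (Y × Y) × O => (q.1.1, a)) Prod.snd).and
        (hψ.comp (fun q : (Y × Y) × O => (q.1.2, a)) Prod.snd))).not
  have hpath : DefPred L N fun v : Fin s → Y => ∃ o, ∀ i, ψ (v i, a) o :=
    .ex (p := fun (v : Fin s → Y) o => ∀ i, ψ (v i, a) o)
      (.forall_finite fun i => hψ.comp (fun q : (Fin s → Y) × O => (q.1 i, a)) Prod.snd)
  obtain ⟨T, _, Z, y, -, -, hpaths, hsep⟩ := exists_morley_tree hVW hI hinc s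
  refine ⟨T, Z, fun η t => (y η t, a), fun ν hν => ?_, hsep⟩
  filter_upwards [hpaths ν hν _ hpath hcon] with t ⟨o, ho⟩
  refine ⟨o, fun η hη hpre => ?_⟩
  obtain ⟨i, hi⟩ := exists_path_eq hν hη hpre y
  exact hi t ▸ ho i

variable {P O : Type w} [FinPower N P] [FinPower N O] {U V : Ultrafilter P} {ρ : P → O → Prop}

/-- Otherwise some `a ⊨ V^j`, `c ⊨ V` and `l ⊨ U^n` are inconsistent, while `a` is consistent with
long Morley sequences of `U`. This gives SOP₁ trees, made of Morley sequences of `U^(n+1)` and of an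
equal type whose first coordinate is `V`. -/
theorem kim_step (hN : HasNoDefinableSOP1Trees L N) (hUV : DefEquiv L N U V)
    (hρ : DefRel L N ρ) {j : ℕ}
    (hj : ∀ n, ∀ᶠ (a : List P) in listPower V j, ∀ᶠ (l : List P) in listPower U n,
      ∃ o, ∀ c ∈ a ++ l, ρ c o) (n : ℕ) :
    ∀ᶠ (a : List P) in listPower V j, ∀ᶠ c in V, ∀ᶠ (l : List P) in listPower U n,
      ∃ o, ∀ d ∈ a ++ c :: l, ρ d o := by
  by_contra hbad
  simp only [← Ultrafilter.eventually_not] at hbad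
  have hfst : (power U (n + 1)).map (fun v => v 0) = U :=
    Ultrafilter.ext fun S => eventually_power_apply (F := U) (m := n + 1) 0 (p := (· ∈ S))
  obtain ⟨V', hV', hV'0⟩ := DefEquiv.exists_map_eq (DefMap.apply 0) (hfst.symm ▸ hUV)
  let ψ (q : (Fin (n + 1) → P) × (Fin j → P)) (o : O) : Prop :=
    (∀ i, ρ (q.1 i) o) ∧ ∀ i, ρ (q.2 i) o
  have hψ : DefRel L N ψ := DefPred.and
    (.forall_finite fun i => hρ.comp (fun q : ((Fin (n + 1) → P) × _) × O => q.1.1 i) Prod.snd)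
    (.forall_finite fun i => hρ.comp (fun q : (_ × (Fin j → P)) × O => q.1.2 i) Prod.snd)
  refine hN _ O ψ hψ (hasFiniteSOP1Trees_of_inconsistent hV'.symm hψ fun s => ?_)
  have hlong := hj (s * (n + 1))
  rw [eventually_listPower] at hlong hbad
  obtain ⟨a, hcon, hinc⟩ := (hlong.and hbad).exists
  refine ⟨a, ?_, ?_⟩
  · rw [← eventually_listPower_flatMap (G := power U (n + 1)) (f := List.ofFn) rfl,
      eventually_listPower] at hcon
    filter_upwards [hcon] with v ⟨o, ho⟩
    refine ⟨o, fun i => ⟨fun k => ho _ ?_, fun k => ho _ ?_⟩⟩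
    · exact List.mem_append_right _ (List.mem_flatMap.mpr
        ⟨v i, List.mem_ofFn.mpr ⟨i, rfl⟩, List.mem_ofFn.mpr ⟨k, rfl⟩⟩)
    · exact List.mem_append_left _ (List.mem_ofFn.mpr ⟨k, rfl⟩)
  · rw [← hV'0, eventually_map_ultrafilter] at hinc
    filter_upwards [hinc] with b hb
    refine eventually_power_succ.mpr (.of_forall fun c => ?_)
    filter_upwards [eventually_listPower.mp hb] with l hl ⟨o, ⟨hl', ha⟩, hb', _⟩
    refine hl ⟨o, List.forall_mem_append.mpr ⟨List.forall_mem_ofFn_iff.mpr ha,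
      List.forall_mem_cons.mpr ⟨hb' 0, List.forall_mem_ofFn_iff.mpr fun i => hl' i.succ⟩⟩⟩

theorem ConsistentAlong.congr (hN : HasNoDefinableSOP1Trees L N) (hUV : DefEquiv L N U V)
    (hρ : DefRel L N ρ) (hU : ConsistentAlong U ρ) : ConsistentAlong V ρ := by
  have mixed (j : ℕ) : ∀ n, ∀ᶠ (a : List P) in listPower V j, ∀ᶠ (l : List P) in listPower U n,
      ∃ o, ∀ c ∈ a ++ l, ρ c o := by
    induction j with
    | zero => exact hU
    | succ j ih =>
      intro n
      rw [eventually_listPower_add]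
      simpa only [eventually_listPower_one, List.append_assoc, List.singleton_append] using
        kim_step hN hUV hρ ih n
  intro m
  simpa only [eventually_listPower_zero, List.append_nil] using mixed m 0

end Kim

/-! ### Symmetry -/

section Symmetry

open Filter

variable {L : FirstOrder.Language.{x, y}} {N : Type w} [L.Structure N]

/-- Morley sequences of `F` are simultaneously `ρ`-related to a realization of the type `G`. -/
def ConsistentOver (L : FirstOrder.Language.{x, y}) (N : Type w) [L.Structure N] {X : Type*}
    {Y : Type*} [FinPower N Y] (F : Ultrafilter X) (G : Ultrafilter Y) (ρ : X → Y → Prop) : Prop :=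
  ∀ θ : Y → Prop, DefPred L N θ → (∀ᶠ b in G, θ b) → ConsistentAlong F fun a b => ρ a b ∧ θ b

section Basic

variable {X Y : Type*} [FinPower N Y] {F : Ultrafilter X} {G : Ultrafilter Y} {ρ : X → Y → Prop}

theorem ConsistentOver.power_left (h : ConsistentOver L N F G ρ) (m : ℕ) :
    ConsistentOver L N (power F (m + 1)) G fun v b => ∀ i, ρ (v i) b := fun θ hθ hG => by
  refine ((h θ hθ hG).regroup (f := List.ofFn) rfl).mono fun b => ⟨b, fun v hv => ?_⟩
  rw [List.forall_mem_ofFn_iff] at hv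
  exact ⟨fun i => (hv i).1, (hv 0).2⟩

theorem ConsistentOver.and_right (h : ConsistentOver L N F G ρ) {θ : Y → Prop}
    (hθ : DefPred L N θ) (hG : ∀ᶠ b in G, θ b) : ConsistentOver L N F G fun a b => ρ a b ∧ θ b :=
  fun _ hθ' hG' => (h _ (hθ.and hθ') (hG.and hG')).mono fun b =>
    ⟨b, fun _ hab => ⟨⟨hab.1, hab.2.1⟩, hab.2.2⟩⟩

end Basic

/-- All leaves of height `s` of the tree `x · t` are `R`-related to `b`. -/
def AllLeavesRelated {A Y T : Type*} (R : A → Y → Prop) (x : List Bool → T → A) (s : ℕ) (t : T)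
    (b : Y) : Prop :=
  ∀ ν : List Bool, ν.length = s → R (x ν t) b

section Trees

variable {X Y T : Type w} [FinPower N X] [FinPower N Y] [FinPower N T] {F F' : Ultrafilter X}
variable {G : Ultrafilter Y} {ρ : X → Y → Prop} {Z : Ultrafilter T} {x : List Bool → T → X} {s : ℕ}

theorem ConsistentOver.congr (hN : HasNoDefinableSOP1Trees L N) (hF : DefEquiv L N F F')
    (hρ : DefRel L N ρ) (h : ConsistentOver L N F G ρ) : ConsistentOver L N F' G ρ :=
  fun θ hθ hG => (h θ hθ hG).congr hN hF (hρ.and (hθ.comp Prod.snd))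

theorem defRel_allLeavesRelated (hρ : DefRel L N ρ) (hx : ∀ ν, DefMap L N (x ν)) (s : ℕ) :
    DefRel L N (AllLeavesRelated ρ x s) := by
  have : Finite {ν : List Bool // ν.length = s} := List.finite_length_eq Bool s
  exact (DefPred.forall_finite (ι := {ν : List Bool // ν.length = s}) fun ν =>
    hρ.comp (fun q : T × Y => x ν q.1) Prod.snd).of_iff fun q =>
      ⟨fun h ν => h ν ν.2, fun h ν hν => h ⟨ν, hν⟩⟩

theorem ConsistentOver.double (hN : HasNoDefinableSOP1Trees L N) (hρ : DefRel L N ρ)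
    (hx : ∀ ν, DefMap L N (x ν)) (h : ConsistentOver L N Z G (AllLeavesRelated ρ x s))
    {K : Ultrafilter (Y × T)} (hK : DefEquiv L N Z (K.map Prod.snd)) :
    ConsistentOver L N (tensor K K) G
      (AllLeavesRelated ρ (branch fun ν (q : Y × T) => x ν q.2) (s + 1)) := fun θ hθ hG => by
  have hKcon := ConsistentAlong.map.mp
    ((h.congr hN hK (defRel_allLeavesRelated hρ hx s)) θ hθ hG)
  refine hKcon.tensor_self.mono fun b => ⟨b, fun q hq => ⟨?_, hq.1.2⟩⟩
  rintro (_ | ⟨_ | _, ν⟩) hν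
  · exact absurd hν (Nat.succ_ne_zero s).symm
  · exact hq.2.1 ν (Nat.succ_injective hν)
  · exact hq.1.1 ν (Nat.succ_injective hν)

/-- The trees witnessing symmetry: a realization of `G` is added below two copies of the tree, whose
leaves are all `ρ`-related to it. -/
theorem exists_leavesRelated_tree (hN : HasNoDefinableSOP1Trees L N) (hρ : DefRel L N ρ)
    (h : ConsistentOver L N F G ρ) (hinc : ∀ᶠ b in G, ∀ᶠ b' in G, ¬∃ a, ρ a b' ∧ ρ a b) (s : ℕ) :
    ∃ (T : Type w) (_ : FinPower N T) (Z : Ultrafilter T) (x : List Bool → T → X)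
      (y : List Bool → T → Y), (∀ ν, DefMap L N (x ν)) ∧ (∀ η, DefMap L N (y η)) ∧
      ConsistentOver L N Z G (AllLeavesRelated ρ x s) ∧ NodesDistributed L N G Z y s ∧
      LeavesRelated ρ Z x y s ∧ Separated (fun b b' => ¬∃ a, ρ a b ∧ ρ a b') Z y s := by
  have hI : DefRel L N fun b b' => ¬∃ a, ρ a b ∧ ρ a b' :=
    (DefPred.ex (p := fun (q : Y × Y) a => ρ a q.1 ∧ ρ a q.2)
      ((hρ.comp Prod.snd fun q : (Y × Y) × X => q.1.1).and
        (hρ.comp Prod.snd fun q : (Y × Y) × X => q.1.2))).not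
  induction s with
  | zero =>
    obtain ⟨b₀, -⟩ := hinc.exists
    refine ⟨X, inferInstance, F, fun _ a => a, fun _ _ => b₀, fun _ => .id, fun _ => .const _,
      fun θ hθ hG => (h θ hθ hG).mono fun b => ⟨b, fun a ha => ⟨fun _ _ => ha.1, ha.2⟩⟩,
      fun η hη hle => ?_, .zero, .zero⟩
    exact absurd (List.length_eq_zero_iff.mp (Nat.le_zero.mp hle)) hη
  | succ s ih =>
    obtain ⟨T, _, Z, x, y, hx, hy, hover, hnodes, hleaves, hsep⟩ := ih
    obtain ⟨K, hKG, hKZ, hK⟩ := DefEquiv.exists_prod (F := Z) (G := G)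
      (R := fun b t => AllLeavesRelated ρ x s t b)
      ((defRel_allLeavesRelated hρ hx s).comp Prod.snd Prod.fst) fun θ hθ hG => by
        filter_upwards [(hover θ hθ hG).eventually_exists] with t ⟨b, hb, hθb⟩ using ⟨b, hθb, hb⟩
    have hJ : IsDoubling L N G Z K (tensor K K) :=
      { map_fst := hKG
        map_snd := hKZ
        map_side := fun
          | true => (map_fst_tensor K K).symm ▸ .refl _
          | false => (map_snd_tensor K K).symm ▸ .refl _ }
    refine ⟨_, inferInstance, tensor K K, branch fun ν q => x ν q.2, branch (graft y),
      defMap_branch fun ν => (hx ν).comp (.snd .id), defMap_branch (defMap_graft hy),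
      hover.double hN hρ hx hKZ, hnodes.double hJ hy, hleaves.double hρ hJ hx hy fun ν hν => ?_,
      hsep.double hI hJ hy fun η hη => ?_⟩
    · filter_upwards [hK] with q hq using hq ν hν
    · rw [← hKG, eventually_map_ultrafilter] at hinc
      rw [eventually_tensor]
      filter_upwards [hinc] with q hq
      rw [hKG] at hq
      exact (hnodes.add_root hJ hy hη) _ (hI.comp id fun _ => q.1) hq

theorem ConsistentOver.not_eventually_inconsistent (hN : HasNoDefinableSOP1Trees L N)
    (hρ : DefRel L N ρ) (h : ConsistentOver L N F G ρ) :
    ¬∀ᶠ b in G, ∀ᶠ b' in G, ¬∃ a, ρ a b' ∧ ρ a b := fun hinc => by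
  refine hN Y X (fun b a => ρ a b) (hρ.comp Prod.snd Prod.fst)
    (hasFiniteSOP1Trees_of_eventually fun s => ?_)
  obtain ⟨T, _, Z, x, y, -, -, -, -, hleaves, hsep⟩ := exists_leavesRelated_tree hN hρ h hinc s
  exact ⟨T, Z, y, fun ν hν => hleaves.eventually_exists hν, hsep⟩

end Trees

section Symm

variable {X Y T : Type w} [FinPower N X] [FinPower N Y] [FinPower N T] {F : Ultrafilter X}
variable {G : Ultrafilter Y} {ρ : X → Y → Prop} {k : ℕ}

/-- A failure of symmetry for Morley sequences of `G` of length `k`. -/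
def HasObstruction (L : FirstOrder.Language.{x, y}) (N : Type w) [L.Structure N] {Y : Type w}
    [FinPower N Y] (G : Ultrafilter Y) (k : ℕ) : Prop :=
  ∃ (T : Type w) (_ : FinPower N T) (Z : Ultrafilter T) (σ : T → Y → Prop), DefRel L N σ ∧
    ConsistentOver L N Z G σ ∧ ¬∀ᶠ (v : Fin k → Y) in power G k, ∃ t, ∀ j, σ t (v j)

theorem not_hasObstruction_zero : ¬HasObstruction L N G 0 := by
  rintro ⟨T, _, Z, σ, -, -, hk⟩
  have := Z.nonempty_of_neBot
  exact hk (.of_forall fun _ => ⟨Classical.arbitrary T, fun j => j.elim0⟩)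

theorem not_hasObstruction_one : ¬HasObstruction L N G 1 := by
  rintro ⟨T, _, Z, σ, hσ, hZ, hk⟩
  have hnone : ∀ᶠ b in G, ¬∃ t, σ t b := by
    simpa only [eventually_power_succ, Ultrafilter.eventually_not, Fin.forall_fin_one,
      Fin.cons_zero, eventually_const] using hk
  have hdef : DefPred L N fun b => ¬∃ t, σ t b :=
    (DefPred.ex (p := fun b t => σ t b) (hσ.comp Prod.snd Prod.fst)).not
  obtain ⟨t, b, hb, hb'⟩ := (hZ _ hdef hnone).eventually_exists.exists
  exact hb' ⟨t, hb⟩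

theorem ConsistentOver.power_right {Z : Ultrafilter T} {σ : T → Y → Prop} (hσ : DefRel L N σ)
    (h : ConsistentOver L N Z G σ) (hk : ¬HasObstruction L N G (k + 1)) :
    ConsistentOver L N Z (power G (k + 1)) fun t v => ∀ j, σ t (v j) := by
  intro θ hθ hG l
  rcases l with _ | l
  · obtain ⟨v, -⟩ := hG.exists
    exact eventually_listPower_zero.mpr ⟨v, List.forall_mem_nil _⟩
  by_contra hl
  rw [← Ultrafilter.eventually_not, eventually_listPower] at hl
  simp only [List.forall_mem_ofFn_iff] at hl
  refine hk ⟨Fin (l + 1) → T, inferInstance, power Z (l + 1), fun w b =>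
    (∀ i, σ (w i) b) ∧ ¬∃ v : Fin (k + 1) → Y, ∀ i, (∀ j, σ (w i) (v j)) ∧ θ v, ?_, ?_, ?_⟩
  · refine DefPred.and (.forall_finite fun i =>
      hσ.comp (fun q : (Fin (l + 1) → T) × Y => q.1 i) Prod.snd) (DefPred.not (.ex ?_))
    exact .forall_finite fun i => .and (.forall_finite fun j =>
      hσ.comp (fun q : ((Fin (l + 1) → T) × Y) × (Fin (k + 1) → Y) => q.1.1 i) fun q => q.2 j)
      (hθ.comp Prod.snd)
  · exact fun θ' hθ' hG' => ((h.power_left l θ' hθ' hG').and_left hl).mono fun b =>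
      ⟨b, fun w ⟨hw, hw'⟩ => ⟨⟨hw.1, hw'⟩, hw.2⟩⟩
  · intro hev
    obtain ⟨v, ⟨w, hw⟩, hv⟩ := (hev.and hG).exists
    exact (hw 0).2 ⟨v, fun i => ⟨fun j => (hw j).1 i, hv⟩⟩

theorem HasObstruction.of_succ (hN : HasNoDefinableSOP1Trees L N)
    (h : HasObstruction L N G (k + 2)) : HasObstruction L N G (k + 1) := by
  obtain ⟨T, _, Z, σ, hσ, hZ, hk⟩ := h
  by_contra hno
  have hσ' : DefRel L N fun t (v : Fin (k + 1) → Y) => ∀ j, σ t (v j) :=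
    DefPred.forall_finite fun j => hσ.comp Prod.fst fun q : T × (Fin (k + 1) → Y) => q.2 j
  refine (hZ.power_right hσ hno).not_eventually_inconsistent hN hσ' ?_
  rw [← Ultrafilter.eventually_not, eventually_power_succ] at hk
  filter_upwards [(eventually_power_apply (m := k + 1) 0).mpr hk] with v hv
  filter_upwards [hv] with v' hv' ⟨t, ht', ht⟩
  exact hv' ⟨t, Fin.forall_fin_succ.mpr ⟨ht 0, ht'⟩⟩

theorem not_hasObstruction (hN : HasNoDefinableSOP1Trees L N) (G : Ultrafilter Y) :
    ∀ k, ¬HasObstruction L N G k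
  | 0 => not_hasObstruction_zero
  | 1 => not_hasObstruction_one
  | k + 2 => fun h => not_hasObstruction hN G (k + 1) (h.of_succ hN)

theorem ConsistentOver.symm (hN : HasNoDefinableSOP1Trees L N) (hρ : DefRel L N ρ)
    (h : ConsistentOver L N F G ρ) : ConsistentOver L N G F fun b a => ρ a b := by
  intro θ hθ hF k
  rw [eventually_listPower]
  simp only [List.forall_mem_ofFn_iff]
  by_contra hk
  exact not_hasObstruction hN G k ⟨X, inferInstance, F, fun a b => ρ a b ∧ θ a,
    hρ.and (hθ.comp Prod.fst), fun θ' hθ' hG =>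
      ((h θ' hθ' hG).and_left hF).mono fun b => ⟨b, fun _ ⟨ha, ha'⟩ => ⟨⟨ha.1, ha'⟩, ha.2⟩⟩, hk⟩

end Symm

end Symmetry

/-! ### The independence theorem -/

section Amalgamation

open Filter

variable {L : FirstOrder.Language.{x, y}} {N : Type w} [L.Structure N]
variable {X C D T : Type w} {Γ : Ultrafilter C} {G : Ultrafilter D} {Z : Ultrafilter T}

/-- The law of a tree from `Z` with a root `(d, c)` added, where the tree is generic over `d`, and
`c` is generic over both. -/
noncomputable def rootedLaw (G : Ultrafilter D) (Γ : Ultrafilter C) (Z : Ultrafilter T) :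
    Ultrafilter ((D × C) × T) :=
  (tensor (tensor G Z) Γ).map fun q => ((q.1.1, q.2), q.1.2)

theorem eventually_rootedLaw {p : (D × C) × T → Prop} :
    (∀ᶠ q in rootedLaw G Γ Z, p q) ↔ ∀ᶠ d in G, ∀ᶠ t in Z, ∀ᶠ c in Γ, p ((d, c), t) := Iff.rfl

theorem map_fst_rootedLaw : (rootedLaw G Γ Z).map Prod.fst = tensor G Γ :=
  Ultrafilter.ext fun s => by
    change (∀ᶠ d in G, ∀ᶠ (_ : T) in Z, ∀ᶠ c in Γ, (d, c) ∈ s) ↔ ∀ᶠ d in G, ∀ᶠ c in Γ, (d, c) ∈ s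
    simp only [eventually_const]

theorem map_erase_rootedLaw :
    (rootedLaw G Γ Z).map (fun q => (q.1.1, q.2)) = tensor G Z :=
  Ultrafilter.ext fun s => by
    change (∀ᶠ d in G, ∀ᶠ t in Z, ∀ᶠ (_ : C) in Γ, (d, t) ∈ s) ↔ ∀ᶠ d in G, ∀ᶠ t in Z, (d, t) ∈ s
    simp only [eventually_const]

theorem map_snd_rootedLaw : (rootedLaw G Γ Z).map Prod.snd = Z :=
  Ultrafilter.ext fun s => by
    change (∀ᶠ (_ : D) in G, ∀ᶠ t in Z, ∀ᶠ (_ : C) in Γ, t ∈ s) ↔ ∀ᶠ t in Z, t ∈ s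
    simp only [eventually_const]

variable [FinPower N X] [FinPower N C] [FinPower N D] [FinPower N T]
variable {P : Ultrafilter X} {α : X → D → Prop} {β : X → C → Prop} {r : D → C → Prop}

/-- The nodes of the second tree have their `D`-entries in a Morley sequence of `G`, so that the
`C`-entry of the first root can be chosen `r`-related to all of them. -/
theorem exists_doubling (h : ConsistentOver L N G Γ r) {δ : T → List D} {k : ℕ}
    (hδ : Z.map δ = listPower G k) :
    ∃ J : Ultrafilter (((D × C) × T) × ((D × C) × T)),
      IsDoubling L N (tensor G Γ) Z (rootedLaw G Γ Z) J ∧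
      J.map (fun q => ((q.1.1.1, q.1.2), (q.2.1.1, q.2.2))) = tensor (tensor G Z) (tensor G Z) ∧
      ∀ᶠ (q : ((D × C) × T) × ((D × C) × T)) in J, ∀ d ∈ q.2.1.1 :: δ q.2.2, r d q.1.1.2 := by
  have compatible : ∀ S ∈ definableFilter L N Γ, ∀ S' ∈ (rootedLaw G Γ Z : Filter ((D × C) × T)),
      ∃ c ∈ S, ∃ q ∈ S', ∀ d ∈ q.1.1 :: δ q.2, r d c := by
    rintro S ⟨θ, hθ, hθΓ, hθS⟩ S' hS'
    have hG : ∀ᶠ d in G, ∀ᶠ t in Z, ∃ c, ∀ d' ∈ d :: δ t, r d' c ∧ θ c := by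
      have := h θ hθ hθΓ (k + 1)
      rwa [eventually_listPower_succ, ← hδ] at this
    have hG' : ∀ᶠ d in G, ∀ᶠ t in Z, ∃ c, ((d, c), t) ∈ S' :=
      (eventually_rootedLaw.mp hS').mono fun d hd => hd.mono fun t ht => ht.exists
    obtain ⟨d, hd, hd'⟩ := (hG.and hG').exists
    obtain ⟨t, ⟨c, hc⟩, c', hc'⟩ := (hd.and hd').exists
    exact ⟨c, hθS c (hc d List.mem_cons_self).2, _, hc', fun d' hd' => (hc d' hd').1⟩
  obtain ⟨K, hKΓ, hKroot, hK⟩ := exists_ultrafilter_prod compatible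
  have hKroot := Ultrafilter.eq_of_le hKroot
  refine ⟨(tensor (tensor G Z) K).map fun q => (((q.1.1, q.2.1), q.1.2), q.2.2),
    ⟨map_fst_rootedLaw, map_snd_rootedLaw.symm ▸ .refl _, fun
      | true => ?_
      | false => ?_⟩, ?_, ?_⟩
  · exact (DefEquiv.tensor (tensor G Z) (.of_le_definableFilter hKΓ)).map
      fun q : (D × T) × C => ((q.1.1, q.2), q.1.2)
  · have hsnd : ((tensor (tensor G Z) K).map Prod.snd).map Prod.snd = rootedLaw G Γ Z := by
      rw [map_snd_tensor, hKroot]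
    exact hsnd ▸ .refl _
  · have hpair : tensor (tensor G Z) ((K.map Prod.snd).map fun q => (q.1.1, q.2)) =
        tensor (tensor G Z) (tensor G Z) := by
      rw [hKroot, map_erase_rootedLaw]
    exact hpair ▸ rfl
  · rw [eventually_map_ultrafilter, eventually_tensor]
    exact .of_forall fun _ => hK

/-- The `D`-entries of the nodes, except the root, belong to the Morley sequence `δ` of `G`. -/
structure NodesInMorleySequence (G : Ultrafilter D) (Z : Ultrafilter T)
    (y : List Bool → T → D × C) (δ : T → List D) (k s : ℕ) : Prop where
  map_eq : Z.map δ = listPower G k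
  mem : ∀ η, η ≠ [] → η.length ≤ s → ∀ t, (y η t).1 ∈ δ t

section Step

variable {y : List Bool → T → D × C} {δ : T → List D} {k s : ℕ} {x : List Bool → T → X}
variable {J : Ultrafilter (((D × C) × T) × ((D × C) × T))}

theorem NodesInMorleySequence.graft_mem (h : NodesInMorleySequence G Z y δ k s) {η : List Bool}
    (hη : η.length ≤ s) (q : (D × C) × T) : (graft y η q).1 ∈ q.1.1 :: δ q.2 := by
  rcases η with _ | ⟨c, η⟩
  · exact List.mem_cons_self
  · exact List.mem_cons_of_mem _ (h.mem _ (List.cons_ne_nil c η) hη _)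

theorem NodesInMorleySequence.double (h : NodesInMorleySequence G Z y δ k s)
    (hJ : J.map (fun q => ((q.1.1.1, q.1.2), (q.2.1.1, q.2.2))) =
      tensor (tensor G Z) (tensor G Z)) :
    NodesInMorleySequence G J (branch (graft y))
      (fun q => (q.1.1.1 :: δ q.1.2) ++ (q.2.1.1 :: δ q.2.2)) ((k + 1) + (k + 1)) (s + 1) where
  map_eq := by
    have hcons : (tensor G Z).map (fun q => q.1 :: δ q.2) = listPower G (k + 1) := by
      rw [← map_cons_tensor_listPower, ← h.map_eq]
      rfl
    rw [← map_append_tensor_listPower, ← hcons]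
    exact congrArg (Ultrafilter.map fun q => (q.1.1 :: δ q.1.2) ++ (q.2.1 :: δ q.2.2)) hJ
  mem := fun
    | [], hη, _, _ => absurd rfl hη
    | true :: _, _, hle, q =>
      List.mem_append_left _ (h.graft_mem (Nat.le_of_succ_le_succ hle) q.1)
    | false :: _, _, hle, q =>
      List.mem_append_right _ (h.graft_mem (Nat.le_of_succ_le_succ hle) q.2)

theorem map_branch_leaf (hx : ∀ ν : List Bool, ν.length = s → Z.map (x ν) = P)
    (hJ : J.map (fun q => ((q.1.1.1, q.1.2), (q.2.1.1, q.2.2))) =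
      tensor (tensor G Z) (tensor G Z)) : ∀ ν : List Bool, ν.length = s + 1 →
    J.map (branch (fun ν (q : (D × C) × T) => x ν q.2) ν) = P
  | [], hν => absurd hν (Nat.succ_ne_zero s).symm
  | c :: ν, hν => by
    rw [← hx ν (Nat.succ_injective hν)]
    have hside : (tensor (tensor G Z) (tensor G Z)).map (side c) = tensor G Z := by
      cases c
      · exact map_snd_tensor _ _
      · exact map_fst_tensor _ _
    have hsnd := map_snd_tensor G Z
    rw [← hside, ← hJ] at hsnd
    cases c <;> exact congrArg (Ultrafilter.map (x ν)) hsnd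

theorem eventually_related_rootedLaw (hβΓ : ∀ᶠ a in P, ∀ᶠ c in Γ, β a c)
    (hαP : ∀ᶠ d in G, ∀ᶠ a in P, α a d) {f : T → X} (hf : Z.map f = P) :
    ∀ᶠ (q : (D × C) × T) in rootedLaw G Γ Z, α (f q.2) q.1.1 ∧ β (f q.2) q.1.2 := by
  rw [eventually_rootedLaw]
  filter_upwards [hαP] with d hd
  rw [← hf] at hd hβΓ
  filter_upwards [hd, hβΓ] with t ht ht'
  exact ht'.mono fun c hc => ⟨ht, hc⟩

end Step

theorem exists_amalgamation_tree (hα : DefRel L N α) (hβ : DefRel L N β)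
    (hβΓ : ∀ᶠ a in P, ∀ᶠ c in Γ, β a c) (hαP : ∀ᶠ d in G, ∀ᶠ a in P, α a d)
    (h : ConsistentOver L N G Γ r) (hno : ∀ a d c, α a d → β a c → ¬r d c) (s : ℕ) :
    ∃ (T : Type w) (_ : FinPower N T) (Z : Ultrafilter T) (x : List Bool → T → X)
      (y : List Bool → T → D × C) (δ : T → List D) (k : ℕ),
      (∀ ν, DefMap L N (x ν)) ∧ (∀ η, DefMap L N (y η)) ∧
      (∀ ν : List Bool, ν.length = s → Z.map (x ν) = P) ∧ NodesInMorleySequence G Z y δ k s ∧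
      LeavesRelated (fun a q => α a q.1 ∧ β a q.2) Z x y s ∧
      Separated (fun q q' => ¬∃ a, (α a q.1 ∧ β a q.2) ∧ α a q'.1 ∧ β a q'.2) Z y s := by
  have hR : DefRel L N fun a (q : D × C) => α a q.1 ∧ β a q.2 :=
    (hα.comp Prod.fst fun p : X × (D × C) => p.2.1).and
      (hβ.comp Prod.fst fun p : X × (D × C) => p.2.2)
  have hI : DefRel L N fun q q' : D × C => ¬∃ a, (α a q.1 ∧ β a q.2) ∧ α a q'.1 ∧ β a q'.2 :=
    (DefPred.ex (p := fun (q : (D × C) × (D × C)) a => (α a q.1.1 ∧ β a q.1.2) ∧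
      α a q.2.1 ∧ β a q.2.2) ((hR.comp Prod.snd fun p : ((D × C) × (D × C)) × X => p.1.1).and
        (hR.comp Prod.snd fun p : ((D × C) × (D × C)) × X => p.1.2))).not
  induction s with
  | zero =>
    obtain ⟨a₀, ha₀⟩ := hβΓ.exists
    obtain ⟨c₀, -⟩ := ha₀.exists
    obtain ⟨d₀, -⟩ := hαP.exists
    refine ⟨X, inferInstance, P, fun _ a => a, fun _ _ => (d₀, c₀), fun _ => [], 0, fun _ => .id,
      fun _ => .const _, fun _ _ => rfl, ⟨?_, fun η hη hle => ?_⟩, .zero, .zero⟩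
    · refine Ultrafilter.ext fun S => ?_
      change (∀ᶠ (_ : X) in P, [] ∈ S) ↔ [] ∈ S
      rw [eventually_const]
    · exact absurd (List.length_eq_zero_iff.mp (Nat.le_zero.mp hle)) hη
  | succ s ih =>
    obtain ⟨T, _, Z, x, y, δ, k, hx, hy, hP, hδ, hleaves, hsep⟩ := ih
    obtain ⟨J, hJ, hpair, hr⟩ := exists_doubling h hδ.map_eq
    refine ⟨_, inferInstance, J, branch fun ν q => x ν q.2, branch (graft y), _, _,
      defMap_branch fun ν => (hx ν).comp (.snd .id), defMap_branch (defMap_graft hy),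
      map_branch_leaf hP hpair, hδ.double hpair, hleaves.double hR hJ hx hy fun ν hν =>
        eventually_related_rootedLaw hβΓ hαP (hP ν hν), hsep.double hI hJ hy fun η hη => ?_⟩
    filter_upwards [hr] with q hq ⟨a, ⟨hα₁, _⟩, _, hβ₂⟩
    exact hno _ _ _ hα₁ hβ₂ (hq _ (hδ.graft_mem hη _))

theorem exists_amalgam (hN : HasNoDefinableSOP1Trees L N) (hα : DefRel L N α) (hβ : DefRel L N β)
    (hβΓ : ∀ᶠ a in P, ∀ᶠ c in Γ, β a c) (hαP : ∀ᶠ d in G, ∀ᶠ a in P, α a d)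
    (h : ConsistentOver L N G Γ r) : ∃ a d c, α a d ∧ β a c ∧ r d c := by
  by_contra hno
  have hno' (a : X) (d : D) (c : C) (hα₁ : α a d) (hβ₁ : β a c) : ¬r d c :=
    fun hr => hno ⟨a, d, c, hα₁, hβ₁, hr⟩
  refine hN (D × C) X (fun q a => α a q.1 ∧ β a q.2) ?_
    (hasFiniteSOP1Trees_of_eventually fun s => ?_)
  · exact (hα.comp Prod.snd fun p : (D × C) × X => p.1.1).and
      (hβ.comp Prod.snd fun p : (D × C) × X => p.1.2)
  · obtain ⟨T, _, Z, x, y, δ, k, -, -, -, -, hleaves, hsep⟩ :=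
      exists_amalgamation_tree hα hβ hβΓ hαP h hno' s
    exact ⟨T, Z, y, fun ν hν => hleaves.eventually_exists hν, hsep⟩

end Amalgamation

/-! ### The compatible order property -/

section CompatibleOrder

open Filter

variable {L : FirstOrder.Language.{x, y}} {N : Type w} [L.Structure N]
variable {X C D : Type w} [FinPower N X] [FinPower N C] [FinPower N D]

theorem ConsistentOver.adjoin (hN : HasNoDefinableSOP1Trees L N) {Γ : Ultrafilter C}
    {G : Ultrafilter D} {P : Ultrafilter X} {α : X → D → Prop} {β : X → C → Prop}
    {r : D → C → Prop} (hα : DefRel L N α) (hβ : DefRel L N β) (hr : DefRel L N r)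
    (hβΓ : ∀ᶠ a in P, ∀ᶠ c in Γ, β a c) (hαP : ∀ᶠ d in G, ∀ᶠ a in P, α a d)
    (h : ConsistentOver L N G Γ r) :
    ConsistentOver L N (tensor G P) Γ fun q c => r q.1 c ∧ α q.2 q.1 ∧ β q.2 c := by
  have hρ : DefRel L N fun c (q : D × X) => r q.1 c ∧ α q.2 q.1 ∧ β q.2 c :=
    (hr.comp (fun t : C × (D × X) => t.2.1) Prod.fst).and
      ((hα.comp (fun t : C × (D × X) => t.2.2) fun t => t.2.1).and
        (hβ.comp (fun t : C × (D × X) => t.2.2) Prod.fst))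
  refine ConsistentOver.symm hN hρ fun θ hθ hGP m => ?_
  rcases m with _ | m
  · obtain ⟨q, -⟩ := hGP.exists
    exact eventually_listPower_zero.mpr ⟨q, List.forall_mem_nil _⟩
  by_contra hm
  rw [← Ultrafilter.eventually_not, eventually_listPower] at hm
  simp only [List.forall_mem_ofFn_iff] at hm
  have hm_def : DefPred L N fun v : Fin (m + 1) → C =>
      ¬∃ q : D × X, ∀ i, (r q.1 (v i) ∧ α q.2 q.1 ∧ β q.2 (v i)) ∧ θ q :=
    .not (.ex (.forall_finite fun i =>
      (hρ.comp (fun t : (Fin (m + 1) → C) × (D × X) => t.1 i) Prod.snd).and (hθ.comp Prod.snd)))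
  have hr_power : DefRel L N fun (v : Fin (m + 1) → C) d => ∀ i, r d (v i) :=
    .forall_finite fun i => hr.comp Prod.snd fun t : (Fin (m + 1) → C) × D => t.1 i
  have hβ_power : DefRel L N fun a (v : Fin (m + 1) → C) => ∀ i, β a (v i) :=
    .forall_finite fun i => hβ.comp Prod.fst fun t : X × (Fin (m + 1) → C) => t.2 i
  have hG_power := (((h.symm hN hr).power_left m).symm hN hr_power).and_right hm_def hm
  obtain ⟨a, d, v, ⟨hαad, hθda⟩, hβav, hrdv, hv⟩ := exists_amalgam hN (P := P)
    (α := fun a d => α a d ∧ θ (d, a)) (hα.and (hθ.comp fun t : X × D => (t.2, t.1))) hβ_power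
    (hβΓ.mono fun a ha => eventually_all.mpr fun i => (eventually_power_apply i).mpr ha)
    ((hαP.and (eventually_tensor.mp hGP)).mono fun d hd => hd.1.and hd.2) hG_power
  exact hv ⟨(d, a), fun i => ⟨⟨hrdv i, hαad, hβav i⟩, hθda⟩⟩

section Arrays

variable {n : ℕ} {U : Ultrafilter X} {x₀ : X} {p : X → Prop}

/-- The tuple `v` with its entry of index `j`, if any, replaced by `a`. -/
def insertAt (j : ℕ) (a : X) (v : Fin n → X) : Fin n → X := fun i => if i.1 = j then a else v i

/-- The law of `n`-tuples whose first `j` entries realize `U`, each of them generic over the later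
ones, and whose remaining entries are `x₀`. -/
noncomputable def descendingArray (n : ℕ) (U : Ultrafilter X) (x₀ : X) :
    ℕ → Ultrafilter (Fin n → X)
  | 0 => pure fun _ => x₀
  | j + 1 => (tensor U (descendingArray n U x₀ j)).map fun q => insertAt j q.1 q.2

/-- The law of `n`-tuples whose first `j` entries realize `U`, each of them generic over the earlier
ones, and whose remaining entries are `x₀`. -/
noncomputable def ascendingArray (n : ℕ) (U : Ultrafilter X) (x₀ : X) :
    ℕ → Ultrafilter (Fin n → X)
  | 0 => pure fun _ => x₀
  | j + 1 => (tensor (ascendingArray n U x₀ j) U).map fun q => insertAt j q.2 q.1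

theorem forall_lt_insertAt {j : ℕ} {a : X} {v : Fin n → X} (ha : p a)
    (hv : ∀ i : Fin n, i.1 < j → p (v i)) (i : Fin n) (hi : i.1 < j + 1) :
    p (insertAt j a v i) := by
  unfold insertAt
  split_ifs with hij
  exacts [ha, hv i (by lia)]

theorem eventually_descendingArray (h : ∀ᶠ a in U, p a) (j : ℕ) :
    ∀ᶠ (v : Fin n → X) in descendingArray n U x₀ j, ∀ i : Fin n, i.1 < j → p (v i) := by
  induction j with
  | zero => exact .of_forall fun v i hi => absurd hi (Nat.not_lt_zero _)
  | succ j ih =>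
    rw [descendingArray, eventually_map_ultrafilter, eventually_tensor]
    filter_upwards [h] with a ha
    exact ih.mono fun v hv => forall_lt_insertAt ha hv

theorem eventually_ascendingArray (h : ∀ᶠ a in U, p a) (j : ℕ) :
    ∀ᶠ (v : Fin n → X) in ascendingArray n U x₀ j, ∀ i : Fin n, i.1 < j → p (v i) := by
  induction j with
  | zero => exact .of_forall fun v i hi => absurd hi (Nat.not_lt_zero _)
  | succ j ih =>
    rw [ascendingArray, eventually_map_ultrafilter, eventually_tensor]
    filter_upwards [ih] with v hv
    exact h.mono fun a ha => forall_lt_insertAt ha hv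

end Arrays

section Crossed

variable {n j : ℕ} {U V : Ultrafilter X} {x₀ : X} {K : Set X} {Cl : (Fin n → X) → Prop}
variable {NE : X → X → Prop} {y d c : Fin n → X} {a b : X}

/-- The tuple starting with the first `m` entries of `d`, continuing with the entries of `c` up to
index `j`, and ending with those of `y`. -/
def hybrid (m j : ℕ) (d c y : Fin n → X) : Fin n → X :=
  fun i => if i.1 < m then d i else if i.1 < j then c i else y i

/-- The compatible order property for the first `j` entries of `d` and `c`, the other entries of the
tuples being read off `y`. -/
def IsCrossed (Cl : (Fin n → X) → Prop) (NE : X → X → Prop) (j : ℕ) (y d c : Fin n → X) : Prop :=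
  (∀ m : Fin (j + 1), Cl (hybrid m j d c y)) ∧
    ∀ q : Fin n × Fin n, q.1 < q.2 → q.2.1 < j → NE (d q.2) (c q.1)

theorem defRel_isCrossed (hCl : DefPred L N Cl) (hNE : DefRel L N NE) (j : ℕ) (y : Fin n → X) :
    DefRel L N (IsCrossed Cl NE j y) := by
  refine .and (.forall_finite fun m => ?_) (.forall_finite fun q => .imp (.const _)
    (.imp (.const _) ?_))
  · exact hCl.comp (fun (t : (Fin n → X) × (Fin n → X)) i =>
      if i.1 < m.1 then t.1 i else if i.1 < j then t.2 i else y i)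
  · exact hNE.comp (fun t : (Fin n → X) × (Fin n → X) => t.1 q.2) fun t => t.2 q.1

theorem IsCrossed.succ (h : IsCrossed Cl NE j (insertAt j b y) d c)
    (hCl : Cl fun i => if i.1 < j + 1 then insertAt j a d i else y i)
    (hNE : ∀ i : Fin n, i.1 < j → NE a (c i)) :
    IsCrossed Cl NE (j + 1) y (insertAt j a d) (insertAt j b c) := by
  constructor
  · intro m
    rcases eq_or_ne m.1 (j + 1) with hm | hm
    · convert hCl using 2 with i
      simp only [hybrid, hm]
      split_ifs <;> rfl
    · convert h.1 ⟨m.1, by lia⟩ using 1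
      funext i
      simp only [hybrid, insertAt]
      split_ifs <;> first | rfl | lia
  · rintro ⟨i, k⟩ hik hk
    have hij : i.1 ≠ j := ((Fin.lt_def.mp hik).trans_le (Nat.le_of_lt_succ hk)).ne
    simp only [insertAt, if_neg hij]
    split_ifs with hkj
    exacts [hNE i (hkj ▸ hik), h.2 (i, k) hik (lt_of_le_of_ne (Nat.le_of_lt_succ hk) hkj)]

/-- The amalgam is built with the type `V` in the role of the new entry of `d`; Kim's
lemma then replaces `V` by `U`. -/
theorem consistentOver_isCrossed_succ (hN : HasNoDefinableSOP1Trees L N)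
    (hUV : DefEquiv L N U V) (hCl : DefPred L N Cl) (hNE : DefRel L N NE)
    (hKU : ∀ᶠ a in U, a ∈ K) (hK : ∀ v : Fin n → X, (∀ i, v i ∈ K) → Cl v)
    (hV : ∀ᶠ a in V, ∀ᶠ b in V, NE a b)
    (ih : ∀ y : Fin n → X, (∀ i, y i ∈ K) → ConsistentOver L N (ascendingArray n U x₀ j)
      (descendingArray n U x₀ j) (IsCrossed Cl NE j y)) (hy : ∀ i, y i ∈ K) :
    ConsistentOver L N (ascendingArray n U x₀ (j + 1)) (descendingArray n U x₀ (j + 1))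
      (IsCrossed Cl NE (j + 1) y) := fun θ hθ hθU => by
  rw [descendingArray, eventually_map_ultrafilter, eventually_tensor] at hθU
  obtain ⟨b, hbK, hbθ⟩ := (hKU.and hθU).exists
  have hbyK : ∀ i, insertAt j b y i ∈ K := fun i => by
    unfold insertAt
    split_ifs
    exacts [hbK, hy i]
  have hα : DefRel L N fun a (d : Fin n → X) =>
      Cl fun i => if i.1 < j + 1 then insertAt j a d i else y i :=
    hCl.comp (fun (t : X × (Fin n → X)) i =>
      if i.1 < j + 1 then if i.1 = j then t.1 else t.2 i else y i)
  have hβ : DefRel L N fun a (c : Fin n → X) => ∀ i : Fin n, i.1 < j → NE a (c i) :=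
    .forall_finite fun i => .imp (.const _) (hNE.comp Prod.fst fun t : X × (Fin n → X) => t.2 i)
  have hadjoin := (ih _ hbyK).adjoin hN (P := V) hα hβ (defRel_isCrossed hCl hNE j _)
    (hV.mono fun a ha => eventually_descendingArray (hUV.symm _ (hNE.comp (fun _ => a) id) ha) j)
    ((eventually_ascendingArray hKU j).mono fun d hd =>
      hUV _ (hα.comp id fun _ => d) <| hKU.mono fun a ha => hK _ fun i => by
        split_ifs with hi
        exacts [forall_lt_insertAt ha hd i hi, hy i])
  have hdef : DefRel L N fun (q : (Fin n → X) × X) (c : Fin n → X) =>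
      IsCrossed Cl NE j (insertAt j b y) q.1 c ∧
        (Cl fun i => if i.1 < j + 1 then insertAt j q.2 q.1 i else y i) ∧
        ∀ i : Fin n, i.1 < j → NE q.2 (c i) :=
    ((defRel_isCrossed hCl hNE j _).comp (fun t : ((Fin n → X) × X) × (Fin n → X) => t.1.1)
      Prod.snd).and ((hα.comp (fun t : ((Fin n → X) × X) × (Fin n → X) => t.1.2)
        fun t => t.1.1).and (hβ.comp (fun t : ((Fin n → X) × X) × (Fin n → X) => t.1.2) Prod.snd))
  have hU := hadjoin.congr hN (DefEquiv.tensor _ hUV.symm) hdef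
  refine ConsistentAlong.map.mpr ((hU _ (hθ.comp fun (v : Fin n → X) i =>
    if i.1 = j then b else v i) hbθ).mono fun c => ⟨insertAt j b c, fun q hq => ⟨?_, hq.2⟩⟩)
  exact hq.1.1.succ hq.1.2.1 hq.1.2.2

theorem exists_compatible_order (hN : HasNoDefinableSOP1Trees L N) (hUV : DefEquiv L N U V)
    (hCl : DefPred L N Cl) (hNE : DefRel L N NE) (hKU : ∀ᶠ a in U, a ∈ K)
    (hK : ∀ v : Fin n → X, (∀ i, v i ∈ K) → Cl v) (hV : ∀ᶠ a in V, ∀ᶠ b in V, NE a b) :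
    ∃ c d : Fin n → X, (∀ m ≤ n, Cl (fun i => if i.1 < m then d i else c i)) ∧
      ∀ i k : Fin n, i < k → NE (d k) (c i) := by
  obtain ⟨x₀, hx₀⟩ := hKU.exists
  have hcrossed (j : ℕ) : ∀ y : Fin n → X, (∀ i, y i ∈ K) →
      ConsistentOver L N (ascendingArray n U x₀ j) (descendingArray n U x₀ j)
        (IsCrossed Cl NE j y) := by
    induction j with
    | zero =>
      refine fun y hy θ _ hθ m => .of_forall fun l => ⟨fun _ => x₀, fun d _ => ⟨⟨fun m => ?_,
        fun q _ h => absurd h (Nat.not_lt_zero _)⟩, hθ⟩⟩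
      convert hK y hy
      funext i
      rw [hybrid, if_neg (by lia), if_neg (Nat.not_lt_zero _)]
    | succ j ih =>
      exact fun y => consistentOver_isCrossed_succ hN hUV hCl hNE hKU hK hV ih
  obtain ⟨d, c, ⟨hCldc, hNEdc⟩, -⟩ := (hcrossed n (fun _ => x₀) (fun _ => hx₀) (fun _ => True)
    (.const _) (.of_forall fun _ => trivial)).eventually_exists.exists
  refine ⟨c, d, fun m hm => ?_, fun i k hik => hNEdc (i, k) hik k.2⟩
  convert hCldc ⟨m, Nat.lt_succ_of_le hm⟩ using 4 with i
  simp only [hybrid, i.2, if_true]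

end Crossed

end CompatibleOrder

/-! ### SOP₁ trees in models of an NSOP₁ theory -/

section Ultrapowers

open Filter

variable {L : FirstOrder.Language.{x, y}} {N : Type w} [L.Structure N] {ι : Type*}

/-- The ultrapower of `A` by the ultrafilter `u`. -/
abbrev Ultrapower (u : Ultrafilter ι) (A : Type*) : Type _ := (u : Filter ι).Product fun _ => A

/-- The element of an ultrapower represented by a family of elements. -/
def ultraClass {A : Type*} (u : Ultrafilter ι) (g : ι → A) : Ultrapower u A :=
  (g : (u : Filter ι).Product fun _ => A)

/-- The tuple of elements of an ultrapower represented by a family of tuples. -/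
def ultraTuple {A α : Type*} (u : Ultrafilter ι) (f : ι → α → A) : α → Ultrapower u A :=
  fun j => ultraClass u fun i => f i j

variable {u : Ultrafilter ι}

theorem exists_ultraClass_eq {A : Type*} (a : Ultrapower u A) : ∃ g, ultraClass u g = a :=
  Quotient.exists_rep a

theorem exists_ultraTuple_eq {A α : Type*} (v : α → Ultrapower u A) : ∃ f, ultraTuple u f = v := by
  choose f hf using fun j => exists_ultraClass_eq (v j)
  exact ⟨fun i j => f j i, funext hf⟩

theorem realize_ultraTuple [Nonempty N] {α : Type*} {φ : L.Formula α} {f : ι → α → N} :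
    φ.Realize (ultraTuple u f) ↔ ∀ᶠ i in u, φ.Realize (f i) :=
  Ultraproduct.realize_formula_cast φ fun j i => f i j

theorem realize_sumElim_ultraTuple [Nonempty N] {α β : Type*} {φ : L.Formula (α ⊕ β)}
    {f : ι → α → N} {g : ι → β → N} :
    φ.Realize (Sum.elim (ultraTuple u f) (ultraTuple u g)) ↔
      ∀ᶠ i in u, φ.Realize (Sum.elim (f i) (g i)) := by
  rw [← realize_ultraTuple]
  refine iff_of_eq (congrArg _ (funext fun j => ?_))
  rcases j with j | j <;> rfl

theorem ultrapower_elementarilyEquivalent [Nonempty N] : N ≅[L] Ultrapower u N :=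
  elementarilyEquivalent_iff.mpr fun φ => by
    rw [Ultraproduct.sentence_realize, eventually_const]

end Ultrapowers

section SOP1Patterns

open Filter

variable {L : FirstOrder.Language.{x, y}} {N : Type w} [L.Structure N]

theorem DefPred.exists_formula {X : Type*} [FinPower N X] {p : X → Prop} (h : DefPred L N p) :
    ∃ (B : Finset N) (ψ : L.Formula ((B : Set N) ⊕ FinPower.Index N X)),
      ∀ a, p a ↔ ψ.Realize (Sum.elim Subtype.val (FinPower.coords a)) := by
  obtain ⟨B, -, hB⟩ := Set.definable_iff_finitely_definable.mp h
  obtain ⟨ψ, hψ⟩ := Set.definable_iff_exists_formula_sum.mp hB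
  refine ⟨B, ψ, fun a => ?_⟩
  simpa only [Set.mem_ofPred_eq, Equiv.symm_apply_apply] using
    Set.ext_iff.mp hψ (FinPower.coords a)

theorem DefRel.exists_formula {Y O : Type*} [FinPower N Y] [FinPower N O] {ρ : Y → O → Prop}
    (h : DefRel L N ρ) :
    ∃ (k n : ℕ) (ψ : L.Formula (Fin k ⊕ Fin n)) (enc : Y → Fin n → N) (dec : O ≃ (Fin k → N)),
      ∀ b o, ρ b o ↔ ψ.Realize (Sum.elim (dec o) (enc b)) := by
  obtain ⟨B, ψ, hψ⟩ := DefPred.exists_formula h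
  obtain ⟨k, ⟨eO⟩⟩ := Finite.exists_equiv_fin (FinPower.Index N O)
  obtain ⟨n, ⟨eY⟩⟩ := Finite.exists_equiv_fin ((B : Set N) ⊕ FinPower.Index N Y)
  refine ⟨k, n, ψ.relabel (Sum.elim (fun a => Sum.inr (eY (Sum.inl a)))
    (Sum.elim (fun i => Sum.inr (eY (Sum.inr i))) fun i => Sum.inl (eO i))),
    fun b j => Sum.elim (fun a : (B : Set N) => a.1) (FinPower.coords b) (eY.symm j),
    FinPower.coords.trans (Equiv.arrowCongr eO (Equiv.refl N)), fun b o => ?_⟩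
  rw [hψ (b, o), Formula.realize_relabel]
  refine iff_of_eq (congrArg _ (funext fun j => ?_))
  rcases j with a | i | i <;> simp only [Sum.elim_inl, Sum.elim_inr, Function.comp_apply,
    Equiv.symm_apply_apply, Equiv.trans_apply, Equiv.arrowCongr_apply, Equiv.coe_refl] <;> rfl

theorem ofFn_prefix_ofFn {X : Type*} (σ : ℕ → X) {m n : ℕ} (h : m ≤ n) :
    (List.ofFn fun j : Fin m => σ j) <+: List.ofFn fun j : Fin n => σ j := by
  obtain ⟨d, rfl⟩ := Nat.exists_eq_add_of_le h
  rw [List.ofFn_add]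
  exact List.prefix_append _ _

theorem HasFiniteSOP1Trees.exists_sequence {Y O : Type*} {ρ : Y → O → Prop}
    (h : HasFiniteSOP1Trees ρ) : ∃ b : ℕ → List Bool → Y,
      (∀ (σ : ℕ → Bool) (s : ℕ), ∃ o, ∀ i < s, ρ (b s (List.ofFn fun j : Fin i => σ j)) o) ∧
      ∀ (s : ℕ) (η₁ η₂ : List Bool), η₂.length < s → η₁ ++ [false] <+: η₂ →
        ¬∃ o, ρ (b s η₂) o ∧ ρ (b s (η₁ ++ [true])) o := by
  choose b hcons hinc using h
  refine ⟨fun s η => b s (false :: η), fun σ s => ?_, fun s η₁ η₂ hlen hη =>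
    hinc s (false :: η₁) (false :: η₂) hlen (List.cons_prefix_cons.mpr ⟨rfl, hη⟩)⟩
  rcases s with _ | s
  · obtain ⟨o, -⟩ := hcons 0 [] rfl
    exact ⟨o, fun i hi => absurd hi (Nat.not_lt_zero i)⟩
  obtain ⟨o, ho⟩ := hcons (s + 1) (false :: List.ofFn fun j : Fin s => σ j) (by simp)
  refine ⟨o, fun i hi => ho _ (List.cons_ne_nil _ _) (List.cons_prefix_cons.mpr ⟨rfl, ?_⟩)⟩
  exact ofFn_prefix_ofFn σ (Nat.le_of_lt_succ hi)

theorem sop1PatternIn_ultrapower [Nonempty N] {ι : Type*} {u : Ultrafilter ι} {height : ι → ℕ}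
    (hu : Tendsto height u atTop) {Y O : Type*} [FinPower N Y] [FinPower N O] {ρ : Y → O → Prop}
    (hρ : DefRel L N ρ) (h : HasFiniteSOP1Trees ρ) : SOP1PatternIn L (Ultrapower u N) := by
  obtain ⟨k, n, ψ, enc, dec, hψ⟩ := hρ.exists_formula
  obtain ⟨b, hcons, hinc⟩ := h.exists_sequence
  refine ⟨k, n, ψ, fun η => ultraTuple u fun i => enc (b (height i) η), fun σ t => ?_,
    fun η₁ η₂ hη ⟨v, hv₂, hv₁⟩ => ?_⟩
  · choose o ho using hcons σ
    refine ⟨ultraTuple u fun i => dec (o (height i)), fun m _ => realize_sumElim_ultraTuple.mpr ?_⟩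
    filter_upwards [hu.eventually_gt_atTop m] with i hi
    exact (hψ _ _).mp (ho _ m hi)
  · obtain ⟨f, rfl⟩ := exists_ultraTuple_eq v
    obtain ⟨i, ⟨hi₂, hi₁⟩, hi⟩ := (((realize_sumElim_ultraTuple.mp hv₂).and
      (realize_sumElim_ultraTuple.mp hv₁)).and (hu.eventually_gt_atTop η₂.length)).exists
    refine hinc (height i) η₁ η₂ hi hη ⟨dec.symm (f i), ?_, ?_⟩ <;>
      rw [hψ, Equiv.apply_symm_apply] <;> assumption

theorem IsNSOP1Th.hasNoDefinableSOP1Trees {A : Type w} [L.Structure A] (hA : IsNSOP1Th L A)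
    [Nonempty N] (hN : A ≅[L] N) : HasNoDefinableSOP1Trees L N := by
  intro Y O _ _ ρ hρ h
  let u : Ultrafilter (ULift.{max x y} ℕ) := (hyperfilter ℕ).map ULift.up
  have hu : Tendsto (ULift.down : ULift.{max x y} ℕ → ℕ) (u : Filter _) atTop :=
    Nat.hyperfilter_le_atTop
  exact hA ⟨Ultrapower u N, inferInstance, hN.trans ultrapower_elementarilyEquivalent,
    sop1PatternIn_ultrapower hu hρ h⟩

end SOP1Patterns

/-! ### Arrays read off from a tree -/

section TreeArrays

open Filter

variable {X : Type*}

/-- The list of the first `i` terms of a sequence. -/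
def history {Y : Type*} (ω : ℕ → Y) (i : ℕ) : List Y := (List.range i).map ω

theorem history_succ {Y : Type*} (ω : ℕ → Y) (i : ℕ) :
    history ω (i + 1) = history ω i ++ [ω i] := by
  rw [history, List.range_succ, List.map_append, List.map_singleton, history]

theorem getD_history {Y : Type*} (ω : ℕ → Y) {i j : ℕ} (h : j < i) (y : Y) :
    (history ω i).getD j y = ω j := by
  simp only [history, List.getD_eq_getElem?_getD, List.getElem?_map, List.getElem?_range h,
    Option.map_some, Option.getD_some]

/-- A sequence of pairs is a tree array for the tree `b` when its first terms run along a path of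
the tree, and its second terms pairwise sit at nodes which a SOP₁ tree makes inconsistent. -/
def IsTreeArray (b : List Bool → X) (ω : ℕ → X × X) : Prop :=
  (∃ η : ℕ → List Bool, (∀ i j, i ≤ j → η i <+: η j) ∧ ∀ i, (ω i).1 = b (η i)) ∧
    ∀ i j, i < j → ∃ η₁ η₂, η₁ ++ [false] <+: η₂ ∧ (ω i).2 = b (η₁ ++ [true]) ∧ (ω j).2 = b η₂

/-- The node extending `η` by `l` zeros and a one. -/
def branchNode (η : List Bool) (l : ℕ) : List Bool := η ++ List.replicate l false ++ [true]

theorem prefix_branchNode (η : List Bool) (l : ℕ) : η <+: branchNode η l := by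
  rw [branchNode, List.append_assoc]
  exact List.prefix_append _ _

theorem append_false_prefix_branchNode (η : List Bool) {k l : ℕ} (h : k < l) :
    η ++ List.replicate k false ++ [false] <+: branchNode η l := by
  obtain ⟨r, rfl⟩ := Nat.exists_eq_add_of_le (Nat.succ_le_of_lt h)
  refine ⟨List.replicate r false ++ [true], ?_⟩
  simp only [branchNode, Nat.succ_eq_add_one, List.replicate_add, List.replicate_one,
    List.append_assoc]

theorem exists_isTreeArray_of_lt (b : List Bool → X) {k l : List (X × X) → List Bool → ℕ}
    (hkl : ∀ h η, k h η < l h η) :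
    ∃ ω, IsTreeArray b ω ∧ ∀ i, ∃ η, ω i =
      (b (branchNode η (l (history ω i) η)), b (branchNode η (k (history ω i) η))) := by
  let entry (s : List (X × X) × List Bool) : X × X :=
    (b (branchNode s.2 (l s.1 s.2)), b (branchNode s.2 (k s.1 s.2)))
  let state (i : ℕ) : List (X × X) × List Bool := Nat.rec ([], [])
    (fun _ s => (s.1 ++ [entry s], branchNode s.2 (l s.1 s.2))) i
  let ω (i : ℕ) : X × X := entry (state i)
  have hstate (i : ℕ) : (state i).1 = history ω i := by
    induction i with
    | zero => rfl
    | succ i ih => rw [history_succ, ← ih]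
  have hpath (i j : ℕ) (hij : i ≤ j) : (state i).2 <+: (state j).2 :=
    Nat.rel_of_forall_rel_succ_of_le (· <+: ·) (f := fun i => (state i).2)
      (fun i => prefix_branchNode _ _) hij
  refine ⟨ω, ⟨⟨fun i => (state (i + 1)).2, fun i j hij => hpath _ _ (Nat.succ_le_succ hij),
    fun _ => rfl⟩, fun i j hij => ?_⟩, fun i => ⟨(state i).2, ?_⟩⟩
  · exact ⟨_, _, ((append_false_prefix_branchNode _ (hkl (state i).1 (state i).2)).trans
      (hpath _ _ hij)).trans (prefix_branchNode _ _), rfl, rfl⟩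
  · rw [← hstate]

theorem exists_lt_forall_iff {ι : Type*} [Finite ι] (p : ι → ℕ → Prop) :
    ∃ k l, k < l ∧ ∀ e, p e l ↔ p e k := by
  obtain ⟨k, l, hkl, heq⟩ := Finite.exists_ne_map_eq_of_infinite fun l e => p e l
  have hiff (e : ι) : p e k ↔ p e l := iff_of_eq (congrFun heq e)
  rcases hkl.lt_or_gt with h | h
  exacts [⟨k, l, h, fun e => (hiff e).symm⟩, ⟨l, k, h, hiff⟩]

theorem exists_isTreeArray_rowwise_iff (b : List Bool → X) {ι : Type*} [Finite ι]
    (E : ι → List (X × X) → X → Prop) :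
    ∃ ω, IsTreeArray b ω ∧
      ∀ e i, E e (history ω i) (ω i).1 ↔ E e (history ω i) (ω i).2 := by
  choose k l hkl hE using fun h η => exists_lt_forall_iff fun e j => E e h (b (branchNode η j))
  obtain ⟨ω, hω, hrow⟩ := exists_isTreeArray_of_lt b hkl
  refine ⟨ω, hω, fun e i => ?_⟩
  obtain ⟨η, hη⟩ := hrow i
  rw [hη]
  exact hE _ η e

theorem exists_ultrafilter_isTreeArray (b : List Bool → X) :
    ∃ u : Ultrafilter (ℕ → X × X), (∀ᶠ ω in u, IsTreeArray b ω) ∧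
      ∀ (E : List (X × X) → X → Prop) (i : ℕ),
        ∀ᶠ ω in u, E (history ω i) (ω i).1 ↔ E (history ω i) (ω i).2 := by
  let good (E : List (X × X) → X → Prop) : Set (ℕ → X × X) :=
    {ω | IsTreeArray b ω ∧ ∀ i, E (history ω i) (ω i).1 ↔ E (history ω i) (ω i).2}
  obtain ⟨u, hu⟩ := Ultrafilter.exists_ultrafilter_of_finite_inter_nonempty (Set.range good) <| by
    intro T hT
    choose E hE using fun t : T => hT t.2
    obtain ⟨ω, htree, hrow⟩ := exists_isTreeArray_rowwise_iff b E
    exact ⟨ω, fun t ht => (hE ⟨t, ht⟩).subset ⟨htree, hrow ⟨t, ht⟩⟩⟩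
  have hgood (E : List (X × X) → X → Prop) : ∀ᶠ ω in u, ω ∈ good E := hu ⟨E, rfl⟩
  exact ⟨u, (hgood fun _ _ => True).mono fun _ h => h.1,
    fun E i => (hgood E).mono fun _ h => h.2 i⟩

end TreeArrays

section FiniteDependence

open Filter

variable {L : FirstOrder.Language.{x, y}} {A : Type w} [L.Structure A] {Y : Type*}

/-- The functions of a sequence of elements of `Y` which depend on finitely many of its terms. -/
def FinDep (Y A : Type*) : Type _ := {f : (ℕ → Y) → A // ∃ m, DependsOn f (Set.Iio m)}

namespace FinDep

theorem exists_dependsOn {ι : Type*} [Finite ι] (f : ι → FinDep Y A) :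
    ∃ m, ∀ i, DependsOn (f i).1 (Set.Iio m) := by
  choose m hm using fun i => (f i).2
  obtain ⟨M, hM⟩ := Finite.exists_le m
  exact ⟨M, fun i => (hm i).mono (Set.Iio_subset_Iio (hM i))⟩

/-- The function of the sequence obtained by applying `g` to finitely many such functions. -/
def map {ι B : Type*} [Finite ι] (g : (ι → A) → B) (f : ι → FinDep Y A) : FinDep Y B :=
  ⟨fun ω => g fun i => (f i).1 ω, (exists_dependsOn f).imp fun _ hm _ _ h =>
    congrArg g (funext fun i => hm i h)⟩

/-- The function of the sequence obtained by applying `g` to its `i`-th term. -/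
def term (g : Y → A) (i : ℕ) : FinDep Y A :=
  ⟨fun ω => g (ω i), i + 1, fun _ _ h => congrArg g (h i (Nat.lt_succ_self i))⟩

end FinDep

theorem realize_default_ultraTuple {ι : Type*} {u : Ultrafilter ι} [Nonempty A] {n : ℕ}
    {φ : L.BoundedFormula Empty n} {f : ι → Fin n → A} :
    φ.Realize default (ultraTuple u f) ↔ ∀ᶠ i in u, φ.Realize default (f i) := by
  refine (iff_of_eq ?_).trans ((Ultraproduct.boundedFormula_realize_cast (u := u)
    (M := fun _ => A) φ (fun e => e.elim) fun j i => f i j).trans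
      (eventually_congr (.of_forall fun i => iff_of_eq ?_))) <;>
  exact congrArg (φ.Realize · _) (Subsingleton.elim _ _)

theorem ultraTuple_snoc {ι : Type*} {u : Ultrafilter ι} {n : ℕ} (f : ι → Fin n → A) (h : ι → A) :
    ultraTuple u (fun i => Fin.snoc (α := fun _ => A) (f i) (h i)) =
      Fin.snoc (α := fun _ => Ultrapower u A) (ultraTuple u f) (ultraClass u h) := by
  funext j
  refine Fin.lastCases ?_ (fun j => ?_) j
  · simp only [ultraTuple, Fin.snoc_last]
  · simp only [ultraTuple, Fin.snoc_castSucc]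

variable (L) (u : Ultrafilter (ℕ → Y))

/-- The classes of the functions which depend on finitely many terms, in an ultrapower indexed by
sequences. -/
def finDepSubstructure (A : Type w) [L.Structure A] : L.Substructure (Ultrapower u A) where
  carrier := Set.range fun f : FinDep Y A => ultraClass u f.1
  fun_mem {n} f v hv := by
    choose g hg using hv
    obtain rfl := funext hg
    exact ⟨FinDep.map (Structure.funMap f) g,
      (Ultraproduct.funMap_cast (M := fun _ => A) f fun i => (g i).1).symm⟩

theorem isElementary_finDepSubstructure [Nonempty A] :
    (finDepSubstructure L u A).IsElementary := by
  refine Substructure.isElementary_of_exists _ fun n φ v a ha => ?_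
  choose g hg using fun i => (v i).2
  obtain ⟨h, rfl⟩ := exists_ultraClass_eq a
  have hv : Subtype.val ∘ v = ultraTuple u fun ω i => (g i).1 ω := funext fun i => (hg i).symm
  choose! skolem hskolem using fun (v : Fin n → A)
    (h : ∃ a, φ.Realize default (Fin.snoc (α := fun _ => A) v a)) => h
  refine ⟨⟨_, FinDep.map skolem g, rfl⟩, ?_⟩
  rw [hv] at ha ⊢
  refine (iff_of_eq (congrArg _ (ultraTuple_snoc _ _))).mp (realize_default_ultraTuple.mpr ?_)
  filter_upwards [realize_default_ultraTuple.mp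
    ((iff_of_eq (congrArg _ (ultraTuple_snoc _ h))).mpr ha)] with ω hω
  exact hskolem _ ⟨_, hω⟩

/-- The elementary substructure of an ultrapower indexed by sequences which consists of the classes
of the functions depending on finitely many terms. -/
def finDepPower (A : Type w) [L.Structure A] [Nonempty A] :
    L.ElementarySubstructure (Ultrapower u A) :=
  ⟨finDepSubstructure L u A, isElementary_finDepSubstructure L u⟩

variable [Nonempty A]

theorem elementarilyEquivalent_finDepPower : A ≅[L] finDepPower L u A :=
  ultrapower_elementarilyEquivalent.trans (finDepPower L u A).elementarilyEquivalent.symm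

/-- The element of the finite dependence power given by a function. -/
def finDepClass (f : FinDep Y A) : finDepPower L u A := ⟨_, f, rfl⟩

variable {L u}

theorem exists_finDepClass_eq {α : Type*} (v : α → finDepPower L u A) :
    ∃ g : α → FinDep Y A, (fun j => finDepClass L u (g j)) = v := by
  choose g hg using fun j => (v j).2
  exact ⟨g, funext fun j => Subtype.ext (hg j)⟩

theorem realize_finDepClass {α : Type*} {φ : L.Formula α} {g : α → FinDep Y A} :
    φ.Realize (fun j => finDepClass L u (g j)) ↔ ∀ᶠ ω in u, φ.Realize fun j => (g j).1 ω := by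
  rw [← (finDepPower L u A).subtype.map_formula]
  exact realize_ultraTuple (f := fun ω j => (g j).1 ω)

end FiniteDependence

section FiniteDependenceArrays

open Filter

variable {L : FirstOrder.Language.{x, y}} {A : Type w} [L.Structure A]

theorem IsTreeArray.realize {m n : ℕ} {b : List Bool → Fin m → A} {Cl : L.Formula (Fin n × Fin m)}
    (hcons : ∀ (ν : List Bool) (η : Fin n → List Bool), (∀ i, η i <+: ν) →
      Cl.Realize fun q => b (η q.1) q.2)
    {ω : ℕ → (Fin m → A) × (Fin m → A)} (hω : IsTreeArray b ω) (f : Fin n → ℕ) :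
    Cl.Realize fun q => (ω (f q.1)).1 q.2 := by
  obtain ⟨⟨η, hη, hfst⟩, -⟩ := hω
  obtain ⟨M, hM⟩ := Finite.exists_le f
  simpa only [hfst] using hcons (η M) (fun i => η (f i)) fun i => hη _ _ (hM i)

theorem IsTreeArray.realize_pair {m : ℕ} {b : List Bool → Fin m → A}
    {NE : L.Formula (Fin m ⊕ Fin m)}
    (hinc : ∀ η₁ η₂ : List Bool, η₁ ++ [false] <+: η₂ →
      NE.Realize (Sum.elim (b (η₁ ++ [true])) (b η₂)))
    {ω : ℕ → (Fin m → A) × (Fin m → A)} (hω : IsTreeArray b ω) {i j : ℕ} (hij : i < j) :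
    NE.Realize (Sum.elim (ω i).2 (ω j).2) := by
  obtain ⟨η₁, η₂, hη, hi, hj⟩ := hω.2 i j hij
  rw [hi, hj]
  exact hinc η₁ η₂ hη

theorem DefPred.realize_coords {N X α : Type*} [L.Structure N] [FinPower N X] (φ : L.Formula α)
    (e : α → FinPower.Index N X) :
    DefPred L N fun a : X => φ.Realize (FinPower.coords a ∘ e) := by
  refine (Set.empty_definable_iff.mpr ⟨φ.relabel e, ?_⟩).mono (Set.empty_subset _)
  ext v
  change φ.Realize (FinPower.coords (FinPower.coords.symm v) ∘ e) ↔ _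
  rw [Equiv.apply_symm_apply]
  exact Formula.realize_relabel.symm

theorem DefPred.realize_uncurry {m n : ℕ} (Cl : L.Formula (Fin n × Fin m)) :
    DefPred L A fun v : Fin n → Fin m → A => Cl.Realize fun q => v q.1 q.2 :=
  realize_coords (N := A) (X := Fin n → Fin m → A) Cl
    fun q => ((q.1, q.2, ()) : Fin n × Fin m × Unit)

theorem DefRel.realize_sumElim {m : ℕ} (NE : L.Formula (Fin m ⊕ Fin m)) :
    DefRel L A fun v w : Fin m → A => NE.Realize (Sum.elim v w) :=
  (DefPred.realize_coords (X := (Fin m → A) × (Fin m → A)) NE (Sum.map (·, ()) (·, ()))).of_iff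
    fun _ => iff_of_eq (congrArg _ (funext fun j => by rcases j with j | j <;> rfl))

variable [Nonempty A]

theorem realize_sumElim_finDepClass {Y α β : Type*} {u : Ultrafilter (ℕ → Y)}
    {φ : L.Formula (α ⊕ β)} {g : α → FinDep Y A} {h : β → FinDep Y A} :
    φ.Realize (Sum.elim (fun j => finDepClass L u (g j)) fun j => finDepClass L u (h j)) ↔
      ∀ᶠ ω in u, φ.Realize (Sum.elim (fun j => (g j).1 ω) fun j => (h j).1 ω) := by
  refine (iff_of_eq (congrArg _ (funext fun j => ?_))).trans
    ((realize_finDepClass (g := Sum.elim g h)).trans (eventually_congr (.of_forall fun ω =>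
      iff_of_eq (congrArg _ (funext fun j => ?_))))) <;>
  rcases j with j | j <;> rfl

section Column

variable (L) {Y : Type*} (u : Ultrafilter (ℕ → Y)) {m : ℕ}

/-- The tuple of elements of the finite dependence power given by the `i`-th term of the sequence,
read as a tuple through `f`. -/
def column (f : Y → Fin m → A) (i : ℕ) : Fin m → finDepPower L u A :=
  fun j => finDepClass L u (.term (fun y => f y j) i)

variable {L u}

theorem DefPred.column_iff {p : (Fin m → finDepPower L u A) → Prop}
    (hp : DefPred L (finDepPower L u A) p) :
    ∃ (E : List Y → (Fin m → A) → Prop) (i₀ : ℕ), ∀ i ≥ i₀, ∀ f : Y → Fin m → A,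
      p (column L u f i) ↔ ∀ᶠ ω in u, E (history ω i) (f (ω i)) := by
  obtain ⟨B, ψ, hψ⟩ := hp.exists_formula
  obtain ⟨g, hg⟩ := exists_finDepClass_eq
    (Subtype.val : ↥(B : Set (finDepPower L u A)) → finDepPower L u A)
  obtain ⟨i₀, hi₀⟩ := FinDep.exists_dependsOn g
  obtain ⟨ω₀⟩ := u.neBot.nonempty
  refine ⟨fun l a => ψ.Realize (Sum.elim (fun t => (g t).1 fun j => l.getD j (ω₀ j))
    fun q => a q.1), i₀, fun i hi f => ?_⟩
  have hhistory (ω : ℕ → Y) (t) : (g t).1 (fun j => (history ω i).getD j (ω₀ j)) = (g t).1 ω :=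
    hi₀ t fun j hj => getD_history ω (lt_of_lt_of_le hj hi) _
  simp only [hhistory]
  rw [hψ, ← hg]
  exact realize_sumElim_finDepClass (h := fun q : Fin m × Unit => .term (fun y => f y q.1) i)

theorem defEquiv_column {u : Ultrafilter (ℕ → (Fin m → A) × (Fin m → A))}
    (hu : ∀ (E : List ((Fin m → A) × (Fin m → A)) → (Fin m → A) → Prop) (i : ℕ),
      ∀ᶠ ω in u, E (history ω i) (ω i).1 ↔ E (history ω i) (ω i).2) :
    DefEquiv L (finDepPower L u A) ((hyperfilter ℕ).map (column L u Prod.fst))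
      ((hyperfilter ℕ).map (column L u Prod.snd)) := by
  intro p hp hfst
  obtain ⟨E, i₀, hE⟩ := hp.column_iff
  have hi₀ : ∀ᶠ i in hyperfilter ℕ, i₀ ≤ i := Nat.hyperfilter_le_atTop (eventually_ge_atTop i₀)
  refine eventually_map_ultrafilter.mpr ?_
  filter_upwards [eventually_map_ultrafilter.mp hfst, hi₀] with i hi hle
  exact (hE i hle _).mpr (((hE i hle _).mp hi).congr (hu E i))

theorem exists_forall_realize_of_finDepPower {ι α : Type*} [Finite ι] {φ : ι → L.Formula α}
    {v : α → finDepPower L u A} (h : ∀ i, (φ i).Realize v) :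
    ∃ a : α → A, ∀ i, (φ i).Realize a := by
  obtain ⟨g, rfl⟩ := exists_finDepClass_eq v
  obtain ⟨ω, hω⟩ := (eventually_all.mpr fun i => realize_finDepClass.mp (h i)).exists
  exact ⟨_, hω⟩

end Column

variable {m n : ℕ}

/-- Two arrays realizing, for the formulas `Cl` and `NE` in the roles of consistency and
inconsistency, a finite part of the compatible order property. -/
def HasFormulaCompatibleOrder (A : Type*) [L.Structure A] (Cl : L.Formula (Fin n × Fin m))
    (NE : L.Formula (Fin m ⊕ Fin m)) : Prop :=
  ∃ c d : Fin n → Fin m → A,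
    (∀ k ≤ n, Cl.Realize fun q => if q.1.1 < k then d q.1 q.2 else c q.1 q.2) ∧
    ∀ i k : Fin n, i < k → NE.Realize (Sum.elim (d k) (c i))

variable {Cl : L.Formula (Fin n × Fin m)} {NE : L.Formula (Fin m ⊕ Fin m)}

theorem HasFormulaCompatibleOrder.of_finDepPower {Y : Type*} {u : Ultrafilter (ℕ → Y)}
    (h : HasFormulaCompatibleOrder (finDepPower L u A) Cl NE) :
    HasFormulaCompatibleOrder A Cl NE := by
  obtain ⟨c, d, hCl, hNE⟩ := h
  have hreal : ∀ e, Formula.Realize (Sum.elim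
      (fun k : Fin (n + 1) => Cl.relabel fun q => if q.1.1 < k.1 then Sum.inr q else Sum.inl q)
      (fun p : {p : Fin n × Fin n // p.1 < p.2} => NE.relabel
        (Sum.elim (fun j => Sum.inr (p.1.2, j)) fun j => Sum.inl (p.1.1, j))) e)
      (Sum.elim (fun q => c q.1 q.2) fun q => d q.1 q.2) := by
    rintro (k | p) <;> refine Formula.realize_relabel.mpr ?_
    · convert hCl k (Nat.le_of_lt_succ k.2) using 2 with q
      simp only [Function.comp_apply, apply_ite (Sum.elim _ _), Sum.elim_inl, Sum.elim_inr]
    · convert hNE p.1.1 p.1.2 p.2 using 1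
      funext j
      rcases j with j | j <;> rfl
  obtain ⟨a, ha⟩ := exists_forall_realize_of_finDepPower hreal
  refine ⟨fun i j => a (Sum.inl (i, j)), fun i j => a (Sum.inr (i, j)), fun k hk => ?_,
    fun i k hik => ?_⟩
  · convert Formula.realize_relabel.mp (ha (Sum.inl ⟨k, Nat.lt_succ_of_le hk⟩)) using 2 with q
    simp only [Function.comp_apply, apply_ite a]
  · convert Formula.realize_relabel.mp (ha (Sum.inr ⟨(i, k), hik⟩)) using 1
    funext j
    rcases j with j | j <;> rfl

/-- Along a path `η` of a SOP₁ tree, two nodes of the form `η 0^l 1` look alike over the previous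
choices by pigeonhole. The tree thus gives rise to two ultrafilters with the same definable sets,
one concentrated on the nodes of a path and one on pairwise inconsistent nodes. -/
theorem IsNSOP1Th.hasFormulaCompatibleOrder (hA : IsNSOP1Th L A) {b : List Bool → Fin m → A}
    (hcons : ∀ (ν : List Bool) (η : Fin n → List Bool), (∀ i, η i <+: ν) →
      Cl.Realize fun q => b (η q.1) q.2)
    (hinc : ∀ η₁ η₂ : List Bool, η₁ ++ [false] <+: η₂ →
      NE.Realize (Sum.elim (b (η₁ ++ [true])) (b η₂))) :
    HasFormulaCompatibleOrder A Cl NE := by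
  obtain ⟨u, htree, hrow⟩ := exists_ultrafilter_isTreeArray b
  have hsnd : ∀ᶠ i in hyperfilter ℕ, ∀ᶠ j in hyperfilter ℕ,
      NE.Realize (Sum.elim (column L u Prod.snd i) (column L u Prod.snd j)) := by
    refine .of_forall fun i => ?_
    filter_upwards [Nat.hyperfilter_le_atTop (eventually_gt_atTop i)] with j hij
    exact realize_sumElim_finDepClass.mpr (htree.mono fun ω hω => hω.realize_pair hinc hij)
  have hfst : ∀ v : Fin n → Fin m → finDepPower L u A,
      (∀ i, v i ∈ Set.range (column L u Prod.fst)) → Cl.Realize fun q => v q.1 q.2 := by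
    intro v hv
    choose f hf using hv
    obtain rfl := funext hf
    exact realize_finDepClass.mpr (htree.mono fun ω hω => hω.realize hcons f)
  obtain ⟨c, d, hcd, hdc⟩ := exists_compatible_order (n := n)
    (hA.hasNoDefinableSOP1Trees (elementarilyEquivalent_finDepPower L u)) (defEquiv_column hrow)
    (.realize_uncurry Cl) (.realize_sumElim NE)
    (eventually_map_ultrafilter.mpr (.of_forall Set.mem_range_self)) hfst hsnd
  have hpower : HasFormulaCompatibleOrder (finDepPower L u A) Cl NE :=
    ⟨c, d, fun k hk => by simpa only [ite_apply] using hcd k hk, hdc⟩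
  exact hpower.of_finDepPower

end FiniteDependenceArrays

/-! ### From the compatible order property to SOP₃ -/

section Crossing

variable {L : FirstOrder.Language.{u, v}} {𝕄 : Type w} [L.Structure 𝕄]

namespace ParamFormula

variable {α : Type w'} {β : Type w₂}

theorem realize_not {φ : ParamFormula L 𝕄 α} {a : α → 𝕄} : φ.not.Realize a ↔ ¬φ.Realize a :=
  Formula.realize_not

theorem realize_subst {γ : Type} {φ : ParamFormula L 𝕄 (α ⊕ γ)} {c : γ → 𝕄} {a : α → 𝕄} :
    (φ.subst c).Realize a ↔ φ.Realize (Sum.elim a c) := by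
  refine Formula.realize_relabel.trans (iff_of_eq (congrArg _ (funext fun t => ?_)))
  rcases t with (t | t) | t <;> rfl

/-- Renaming of the free variables of a formula with parameters. -/
def relabel (g : α → β) (φ : ParamFormula L 𝕄 α) : ParamFormula L 𝕄 β :=
  ⟨φ.Params, φ.toFormula.relabel (Sum.map g id), φ.params⟩

theorem realize_relabel {g : α → β} {φ : ParamFormula L 𝕄 α} {b : β → 𝕄} :
    (φ.relabel g).Realize b ↔ φ.Realize (b ∘ g) := by
  refine Formula.realize_relabel.trans (iff_of_eq (congrArg _ (funext fun t => ?_)))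
  rcases t with t | t <;> rfl

/-- Conjunction of formulas with parameters. -/
protected def inf (φ ψ : ParamFormula L 𝕄 α) : ParamFormula L 𝕄 α :=
  ⟨φ.Params ⊕ ψ.Params, φ.toFormula.relabel (Sum.map id Sum.inl) ⊓
    ψ.toFormula.relabel (Sum.map id Sum.inr), Sum.elim φ.params ψ.params⟩

theorem realize_inf {φ ψ : ParamFormula L 𝕄 α} {a : α → 𝕄} :
    (φ.inf ψ).Realize a ↔ φ.Realize a ∧ ψ.Realize a := by
  simp only [Realize, ParamFormula.inf, Formula.realize_inf, Formula.realize_relabel,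
    Sum.elim_comp_map, Function.comp_id, Sum.elim_comp_inl, Sum.elim_comp_inr]

/-- The formula `∃ x, φ(x, y₀) ∧ … ∧ φ(x, yₙ₋₁)` in the variables `y₀, …, yₙ₋₁`. -/
noncomputable def consistency {k : ℕ} (φ : ParamFormula L 𝕄 (Fin k ⊕ β)) (n : ℕ) :
    ParamFormula L 𝕄 (Fin n × β) :=
  ⟨φ.Params, Formula.iExs (Fin k) (Formula.iInf fun i : Fin n => φ.toFormula.relabel
    (Sum.elim (Sum.elim Sum.inr fun t => Sum.inl (Sum.inl (i, t))) fun p => Sum.inl (Sum.inr p))),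
    φ.params⟩

theorem realize_consistency {k n : ℕ} {φ : ParamFormula L 𝕄 (Fin k ⊕ β)} {c : Fin n × β → 𝕄} :
    (φ.consistency n).Realize c ↔ ∃ x, ∀ i, φ.Realize (Sum.elim x fun t => c (i, t)) := by
  simp only [Realize, consistency, Formula.realize_iExs, Formula.realize_iInf,
    Formula.realize_relabel]
  refine exists_congr fun x => forall_congr' fun i => iff_of_eq (congrArg _ (funext fun t => ?_))
  rcases t with (t | t) | t <;> rfl

/-- The formula `φ(x, c') ∧ φ(x', d) ∧ ¬∃ y, φ(y, c) ∧ φ(y, d')` relating `(x, c, d)` to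
`(x', c', d')`. -/
noncomputable def crossing {k : ℕ} (φ : ParamFormula L 𝕄 (Fin k ⊕ β)) :
    ParamFormula L 𝕄 ((Fin k ⊕ (β ⊕ β)) ⊕ (Fin k ⊕ (β ⊕ β))) :=
  (φ.relabel (Sum.elim (Sum.inl ∘ Sum.inl) (Sum.inr ∘ Sum.inr ∘ Sum.inl))).inf <|
    (φ.relabel (Sum.elim (Sum.inr ∘ Sum.inl) (Sum.inl ∘ Sum.inr ∘ Sum.inr))).inf
      ((φ.consistency 2).relabel fun q =>
        if q.1 = 0 then Sum.inl (Sum.inr (Sum.inl q.2)) else Sum.inr (Sum.inr (Sum.inr q.2))).not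

variable {k : ℕ} {φ : ParamFormula L 𝕄 (Fin k ⊕ β)}

theorem ParamsIn.crossing {A : Set 𝕄} (hφ : φ.ParamsIn A) : φ.crossing.ParamsIn A := by
  rintro (p | p | p) <;> exact hφ p

theorem realize_crossing {x x' : Fin k → 𝕄} {c c' d d' : β → 𝕄} :
    φ.crossing.Realize (Sum.elim (Sum.elim x (Sum.elim c d)) (Sum.elim x' (Sum.elim c' d'))) ↔
      φ.Realize (Sum.elim x c') ∧ φ.Realize (Sum.elim x' d) ∧
        ¬∃ y, φ.Realize (Sum.elim y c) ∧ φ.Realize (Sum.elim y d') := by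
  simp only [crossing, realize_inf, realize_not, realize_relabel, realize_consistency,
    Fin.forall_fin_two, Sum.comp_elim, ← Function.comp_assoc, Sum.elim_comp_inl,
    Sum.elim_comp_inr]
  rfl

/-- In a cycle `e₁, e₂, e₃, e₁`, the `x`-part of `e₃` realizes both instances whose joint
realization is forbidden by the relation from `e₁` to `e₂`. -/
theorem not_crossing_cycle {e₁ e₂ e₃ : Fin k ⊕ (β ⊕ β) → 𝕄}
    (h₁₂ : φ.crossing.Realize (Sum.elim e₁ e₂)) (h₂₃ : φ.crossing.Realize (Sum.elim e₂ e₃)) :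
    ¬φ.crossing.Realize (Sum.elim e₃ e₁) := by
  have hsplit (e : Fin k ⊕ (β ⊕ β) → 𝕄) :
      ∃ x c d, e = Sum.elim x (Sum.elim c d) :=
    ⟨e ∘ Sum.inl, e ∘ Sum.inr ∘ Sum.inl, e ∘ Sum.inr ∘ Sum.inr, by
      funext t; rcases t with t | t | t <;> rfl⟩
  obtain ⟨x₁, c₁, d₁, rfl⟩ := hsplit e₁
  obtain ⟨x₂, c₂, d₂, rfl⟩ := hsplit e₂
  obtain ⟨x₃, c₃, d₃, rfl⟩ := hsplit e₃
  rw [realize_crossing] at h₁₂ h₂₃ ⊢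
  exact fun h₃₁ => h₁₂.2.2 ⟨x₃, h₃₁.1, h₂₃.2.1⟩

end ParamFormula

theorem IsNSOP3.exists_cycle (h : IsNSOP3 L 𝕄) {α : Type*} [Finite α]
    {R : ParamFormula L 𝕄 (α ⊕ α)} {a : ℕ → α → 𝕄}
    (ha : ∀ i j, i < j → R.Realize (Sum.elim (a i) (a j))) :
    ∃ e₁ e₂ e₃ : α → 𝕄, R.Realize (Sum.elim e₁ e₂) ∧ R.Realize (Sum.elim e₂ e₃) ∧
      R.Realize (Sum.elim e₃ e₁) := by
  obtain ⟨q, ⟨e⟩⟩ := Finite.exists_equiv_fin α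
  have hrel (b b' : Fin q → 𝕄) : (R.relabel (Sum.map e e)).Realize (Sum.elim b b') ↔
      R.Realize (Sum.elim (b ∘ e) (b' ∘ e)) := by
    rw [ParamFormula.realize_relabel, Sum.elim_comp_map]
  by_contra hcycle
  refine h ⟨q, R.relabel (Sum.map e e), fun i => a i ∘ e.symm, fun i j hij => ?_, ?_⟩
  · simpa only [hrel, Function.comp_assoc, e.symm_comp_self, Function.comp_id] using ha i j hij
  · rintro ⟨b₁, b₂, b₃, hb⟩
    simp only [hrel] at hb
    exact hcycle ⟨_, _, _, hb⟩

theorem IsMonster.exists_chain {κ : Cardinal.{w}} [IsMonster L 𝕄 κ] (hκ : Cardinal.aleph0 < κ)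
    {A : Set 𝕄} (hA : Cardinal.mk A < κ) {α : Type} [Countable α] {R : ParamFormula L 𝕄 (α ⊕ α)}
    (hR : R.ParamsIn A)
    (hfin : ∀ n, ∃ e : Fin n → α → 𝕄, ∀ i j, i < j → R.Realize (Sum.elim (e i) (e j))) :
    ∃ a : ℕ → α → 𝕄, ∀ i j, i < j → R.Realize (Sum.elim (a i) (a j)) := by
  classical
  let S (q : ℕ × ℕ) : ParamFormula L 𝕄 (ULift.{w} (ℕ × α)) :=
    R.relabel (Sum.elim (fun t => ⟨q.1, t⟩) fun t => ⟨q.2, t⟩)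
  have hS (q : ℕ × ℕ) (a : ULift.{w} (ℕ × α) → 𝕄) : (S q).Realize a ↔
      R.Realize (Sum.elim (fun t => a ⟨q.1, t⟩) fun t => a ⟨q.2, t⟩) :=
    ParamFormula.realize_relabel.trans (by rw [Sum.comp_elim]; rfl)
  obtain ⟨a, ha⟩ := IsMonster.saturated (κ := κ) A (S '' {q | q.1 < q.2})
    (Cardinal.mk_le_aleph0.trans_lt hκ) hA (Set.forall_mem_image.mpr fun _ _ => hR) fun S₀ hS₀ => by
      obtain ⟨T, hT, rfl⟩ := Finset.subset_set_image_iff.mp hS₀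
      obtain ⟨e, he⟩ := hfin (T.sup Prod.snd + 1)
      refine ⟨fun t => e (Fin.ofNat _ t.down.1) t.down.2, fun ψ hψ => ?_⟩
      obtain ⟨q, hq, rfl⟩ := Finset.mem_image.mp hψ
      have hlt : q.2 < T.sup Prod.snd + 1 := Nat.lt_succ_of_le (Finset.le_sup (f := Prod.snd) hq)
      refine (hS q _).mpr (he (Fin.ofNat _ q.1) (Fin.ofNat _ q.2) ?_)
      rw [Fin.lt_def, Fin.val_ofNat, Fin.val_ofNat, Nat.mod_eq_of_lt hlt,
        Nat.mod_eq_of_lt ((hT hq).trans hlt)]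
      exact hT hq
  exact ⟨fun i t => a ⟨i, t⟩, fun i j hij => (hS (i, j) a).mp (ha _ ⟨(i, j), hij, rfl⟩)⟩

theorem aleph0_lt_of_card_elementarySubstructure_lt [Infinite 𝕄] {κ : Cardinal.{w}}
    (M : L.ElementarySubstructure 𝕄) (hM : Cardinal.mk M < κ) : Cardinal.aleph0 < κ := by
  have : Infinite M := (ElementarySubstructure.elementarilyEquivalent M).infinite_iff.mpr ‹_›
  exact (Cardinal.aleph0_le_mk M).trans_lt hM

end Crossing

section Internal

/-- A SOP₁ tree for the relation `ρ`. Consistency is only required along the finite initial parts of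
the branches. -/
structure IsSOP1Tree {O Y : Type*} (ρ : O → Y → Prop) (b : List Bool → Y) : Prop where
  consistent (ν : List Bool) : ∃ o, ∀ η, η <+: ν → ρ o (b η)
  inconsistent {η₁ η₂ : List Bool} (h : η₁ ++ [false] <+: η₂) :
    ¬∃ o, ρ o (b η₂) ∧ ρ o (b (η₁ ++ [true]))

theorem IsSOP1Tree.infinite {O Y : Type*} {ρ : O → Y → Prop} {b : List Bool → Y}
    (hb : IsSOP1Tree ρ b) : Infinite Y := by
  have hne (i j : ℕ) (hij : i < j) : b (branchNode [] i) ≠ b (branchNode [] j) := by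
    intro heq
    obtain ⟨o, ho⟩ := hb.consistent (branchNode [] j)
    have hj := ho _ List.prefix_rfl
    exact hb.inconsistent (append_false_prefix_branchNode [] hij) ⟨o, hj, heq ▸ hj⟩
  refine .of_injective (fun i => b (branchNode [] i)) fun i j heq => ?_
  by_contra hij
  rcases lt_or_gt_of_ne hij with h | h
  exacts [hne i j h heq, hne j i h heq.symm]

theorem prefix_eq_ofFn_getD {η ν : List Bool} (h : η <+: ν) :
    (List.ofFn fun i : Fin η.length => ν.getD i false) = η := by
  obtain ⟨t, rfl⟩ := h
  refine List.ext_getElem List.length_ofFn fun i _ hi => ?_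
  simp only [List.getElem_ofFn, List.getD_append _ _ _ _ hi, List.getD_eq_getElem _ _ hi]

variable {L : FirstOrder.Language.{u, v}} {𝕄 : Type w} [L.Structure 𝕄] {A : Set 𝕄} {nv : ℕ}
  {P : Set (ParamFormula L 𝕄 (Fin nv))}

theorem exists_isSOP1Tree_of_not_coNSOP1 (h : ¬CoNSOP1 L 𝕄 A P) :
    ∃ (k m : ℕ) (φ : ParamFormula L 𝕄 (Fin k ⊕ (Fin m × Fin nv)))
      (b : List Bool → Fin m → PRealizations L 𝕄 P), φ.ParamsIn A ∧
        IsSOP1Tree (fun x c => φ.Realize (Sum.elim x (flat fun j => (c j).1))) b := by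
  obtain ⟨k, m, φ, b, hφ, hb, hcons, hinc⟩ := not_not.mp h
  refine ⟨k, m, φ, fun η j => ⟨b η j, hb η j⟩, hφ, ⟨fun ν => ?_, fun hη => ?_⟩⟩
  · obtain ⟨x, hx⟩ := hcons (fun i => ν.getD i false) (Finset.range (ν.length + 1))
    refine ⟨x, fun η hη => ?_⟩
    have hlen : η.length ∈ Finset.range (ν.length + 1) :=
      Finset.mem_range_succ_iff.mpr hη.length_le
    simpa only [ParamFormula.realize_subst, prefix_eq_ofFn_getD hη] using hx _ hlen
  · simpa only [ParamFormula.realize_subst] using hinc _ _ hη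

variable {k m n : ℕ} {φ : ParamFormula L 𝕄 (Fin k ⊕ (Fin m × Fin nv))}

/-- The formula of the internal language which stands for `φ.consistency n`. -/
noncomputable def internalConsistency (hφ : φ.ParamsIn A) (n : ℕ) :
    (pLang L 𝕄 A nv).Formula (Fin n × Fin m) :=
  Relations.formula (L := pLang L 𝕄 A nv) (n := n * m)
    ⟨(φ.consistency n).relabel fun q => (finProdFinEquiv (q.1, q.2.1), q.2.2), hφ⟩
    fun t => Term.var (finProdFinEquiv.symm t)

theorem realize_internalConsistency {hφ : φ.ParamsIn A} {c : Fin n × Fin m → PRealizations L 𝕄 P} :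
    (internalConsistency hφ n).Realize c ↔
      ∃ x, ∀ i, φ.Realize (Sum.elim x (flat fun j => (c (i, j)).1)) := by
  refine (Formula.realize_rel (L := pLang L 𝕄 A nv)).trans
    (ParamFormula.realize_relabel.trans (ParamFormula.realize_consistency.trans ?_))
  simp only [Function.comp_apply, Term.realize_var, Equiv.symm_apply_apply]
  rfl

/-- The formula of the internal language expressing that two instances of `φ` are inconsistent. -/
noncomputable def internalInconsistency (hφ : φ.ParamsIn A) :
    (pLang L 𝕄 A nv).Formula (Fin m ⊕ Fin m) :=
  ((internalConsistency hφ 2).relabel fun q => if q.1 = 0 then Sum.inl q.2 else Sum.inr q.2).not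

theorem realize_internalInconsistency {hφ : φ.ParamsIn A} {c d : Fin m → PRealizations L 𝕄 P} :
    (internalInconsistency hφ).Realize (Sum.elim c d) ↔
      ¬∃ x, φ.Realize (Sum.elim x (flat fun j => (c j).1)) ∧
        φ.Realize (Sum.elim x (flat fun j => (d j).1)) := by
  rw [internalInconsistency, Formula.realize_not, Formula.realize_relabel,
    realize_internalConsistency]
  simp only [Fin.forall_fin_two]
  rfl

theorem HasFormulaCompatibleOrder.exists_crossing_chain {hφ : φ.ParamsIn A}
    (h : HasFormulaCompatibleOrder (PRealizations L 𝕄 P) (internalConsistency hφ n)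
      (internalInconsistency hφ)) :
    ∃ e : Fin n → Fin k ⊕ (Fin m × Fin nv ⊕ Fin m × Fin nv) → 𝕄,
      ∀ i j, i < j → φ.crossing.Realize (Sum.elim (e i) (e j)) := by
  obtain ⟨c, d, hcons, hinc⟩ := h
  choose x hx using fun i : Fin n => realize_internalConsistency.mp (hcons i i.2.le)
  refine ⟨fun i => Sum.elim (x i) (Sum.elim (flat fun j => (c i j).1) (flat fun j => (d i j).1)),
    fun i j hij => ParamFormula.realize_crossing.mpr ⟨?_, ?_, ?_⟩⟩
  · simpa only [Fin.val_fin_lt, if_neg hij.le.not_gt] using hx i j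
  · simpa only [Fin.val_fin_lt, if_pos hij] using hx j i
  · simpa only [and_comm] using realize_internalInconsistency.mp (hinc i j hij)

theorem IsNSOP1Th.exists_crossing_chain (hA : IsNSOP1Th (pLang L 𝕄 A nv) (PRealizations L 𝕄 P))
    (hφ : φ.ParamsIn A) {b : List Bool → Fin m → PRealizations L 𝕄 P}
    (hb : IsSOP1Tree (fun x c => φ.Realize (Sum.elim x (flat fun j => (c j).1))) b) (n : ℕ) :
    ∃ e : Fin n → Fin k ⊕ (Fin m × Fin nv ⊕ Fin m × Fin nv) → 𝕄,
      ∀ i j, i < j → φ.crossing.Realize (Sum.elim (e i) (e j)) := by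
  have : Nonempty (PRealizations L 𝕄 P) := by
    by_contra hempty
    have := not_nonempty_iff.mp hempty
    exact not_finite_iff_infinite.mpr hb.infinite inferInstance
  refine HasFormulaCompatibleOrder.exists_crossing_chain (hφ := hφ)
    (hA.hasFormulaCompatibleOrder (b := b) (fun ν η hη => ?_) fun η₁ η₂ hη => ?_)
  · obtain ⟨x, hx⟩ := hb.consistent ν
    exact realize_internalConsistency.mpr ⟨x, fun i => hx _ (hη i)⟩
  · refine realize_internalInconsistency.mpr ?_
    simpa only [and_comm] using hb.inconsistent hη

theorem coNSOP1_of_finite [Finite 𝕄] : CoNSOP1 L 𝕄 A P := by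
  by_contra h
  obtain ⟨k, m, φ, b, -, hb⟩ := exists_isSOP1Tree_of_not_coNSOP1 h
  have : Finite (PRealizations L 𝕄 P) := Subtype.finite
  exact not_finite_iff_infinite.mpr hb.infinite inferInstance

end Internal

theorem statement_0_general
    (L : FirstOrder.Language.{u, v}) (𝕄 : Type w) [L.Structure 𝕄]
    (κ : Cardinal.{w}) [IsMonster L 𝕄 κ] (hκ : Cardinal.aleph0 < κ)
    (A : Set 𝕄) (hA : Cardinal.mk A < κ) {nv : ℕ} (P : Set (ParamFormula L 𝕄 (Fin nv)))
    (hNSOP3 : IsNSOP3 L 𝕄)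
    (hInternal : IsNSOP1Th (pLang L 𝕄 A nv) (PRealizations L 𝕄 P)) :
    CoNSOP1 L 𝕄 A P := by
  by_contra hP
  obtain ⟨k, m, φ, b, hφ, hb⟩ := exists_isSOP1Tree_of_not_coNSOP1 hP
  obtain ⟨a, ha⟩ := IsMonster.exists_chain hκ hA hφ.crossing
    (hInternal.exists_crossing_chain hφ hb)
  obtain ⟨e₁, e₂, e₃, h₁₂, h₂₃, h₃₁⟩ := hNSOP3.exists_cycle ha
  exact ParamFormula.not_crossing_cycle h₁₂ h₂₃ h₃₁

/-- if `T` is NSOP₃ and `p(x)` is an internally NSOP₁ partial type over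
a small model `M`, then `p(x)` is co-NSOP₁. -/
theorem statement_0
    (L : FirstOrder.Language.{u, v}) (𝕄 : Type w) [L.Structure 𝕄]
    (κ : Cardinal.{w}) [IsMonster L 𝕄 κ]
    (M : L.ElementarySubstructure 𝕄) (hMsmall : Cardinal.mk ↥(M : Set 𝕄) < κ)
    {nv : ℕ} (P : Set (ParamFormula L 𝕄 (Fin nv)))
    (hP : ∀ φ ∈ P, φ.ParamsIn (M : Set 𝕄))
    (hNSOP3 : IsNSOP3 L 𝕄)
    (hInternal : IsNSOP1Th (pLang L 𝕄 (M : Set 𝕄) nv) (PRealizations L 𝕄 P)) :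
    CoNSOP1 L 𝕄 (M : Set 𝕄) P := by
  exact (finite_or_infinite 𝕄).elim (fun _ => coNSOP1_of_finite) fun _ => statement_0_general L 𝕄 κ
    (aleph0_lt_of_card_elementarySubstructure_lt M hMsmall) M hMsmall P hNSOP3 hInternal

end NSOP3Paper
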